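/- arXiv:2202.04535 — 9 statements merged into one kernel-verified Lean document; each statement's English description precedes it below -/
import Mathlib

section
/- Let S be an infinite set, let n, m ∈ ℕ, let s ∈ S^m, and let σ : S^{n+1} → S^m be a system of functional equations σ(x_1,…,x_n,x_{n+1}) = s given by functions f_1,…,f_m : S^{n+1} → S. Suppose there exists k ∈ ℕ such that for every t ∈ S the system σ(x_1,…,x_n,t) = s has at most k solutions (x_1,…,x_n) ∈ S^n. Then the following are equivalent: (1) the system σ(x_1,…,x_n,x_{n+1}) = s is partition regular over S; (2) the set of ultrafilter witnesses of the partition regularity of the system is non-empty, and for every witness 𝒰 there exists B ∈ 𝒰 such that every solution (a_1,…,a_{n+1}) with all entries in B is constant; (3) there exists r ∈ ℕ and a coloring c₀ : S → {1,…,r} such that the system has a c₀-monochromatic solution and every c₀-monochromatic solution of the system is constant. -/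
/-! Join `t` to every value occurring in a solution whose distinguished entry is `t`. Each vertex
emits at most `d` such edges, so every nonempty finite set of vertices has a member that at most
`d` edges enter from inside the set: the graph is `2 * d`-degenerate, hence
`2 * d + 1`-colorable, greedily on finite sets and by compactness overall. An entry with the same
color as the distinguished entry of its solution must equal it, so this single coloring has only
constant monochromatic solutions. Testing partition regularity on it gives a constant solution,
whose value generates a principal witness; conversely every ultrafilter contains a color class of
any finite coloring. -/

section DegenerateGraphs

variable {V : Type*} {d : ℕ}

/-- A `d`-degenerate graph: every nonempty finite set `T` of vertices contains a vertex with at most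
`d` neighbors in `T`, so that a greedy coloring of a finite set of vertices needs only `d + 1`
colors. The graph may be infinite: only finite sets `T` are tested. -/
def IsDegenerate (G : SimpleGraph V) (d : ℕ) : Prop :=
  ∀ T : Finset V, T.Nonempty → ∃ v ∈ T, (G.neighborSet v ∩ T).encard ≤ d

theorem exists_notMem_image_of_encard_le {c : V → Fin (d + 1)} {A : Set V} (hA : A.encard ≤ d) :
    ∃ q, q ∉ c '' A := by
  by_contra! hsurj
  have hcard : (d + 1 : ℕ∞) ≤ d := calc
    (d + 1 : ℕ∞) = (c '' A).encard := by
      rw [Set.eq_univ_of_forall hsurj, Set.encard_univ, ENat.card_eq_coe_fintype_card,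
        Fintype.card_fin, Nat.cast_add_one]
    _ ≤ A.encard := Set.encard_image_le c A
    _ ≤ d := hA
  exact absurd (by exact_mod_cast hcard) (Nat.not_succ_le_self d)

theorem IsDegenerate.exists_coloring_on_finset {G : SimpleGraph V} (hG : IsDegenerate G d)
    (T : Finset V) :
    ∃ c : V → Fin (d + 1), ∀ u ∈ T, ∀ v ∈ T, G.Adj u v → c u ≠ c v := by
  classical
  induction T using Finset.strongInduction with
  | H T ih =>
    obtain rfl | hT := T.eq_empty_or_nonempty
    · exact ⟨fun _ => 0, by simp⟩
    obtain ⟨v, hvT, hdeg⟩ := hG T hT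
    obtain ⟨c, hc⟩ := ih (T.erase v) (Finset.erase_ssubset hvT)
    obtain ⟨q, hq⟩ := exists_notMem_image_of_encard_le (c := c) hdeg
    have hfree : ∀ u ∈ T, G.Adj v u → c u ≠ q := fun u huT hvu hcu => hq ⟨u, ⟨hvu, huT⟩, hcu⟩
    refine ⟨Function.update c v q, fun u huT w hwT huw => ?_⟩
    obtain rfl | huv := eq_or_ne u v
    · rw [Function.update_self, Function.update_of_ne huw.ne']
      exact (hfree w hwT huw).symm
    obtain rfl | hwv := eq_or_ne w v
    · rw [Function.update_self, Function.update_of_ne huw.ne]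
      exact hfree u huT huw.symm
    · rw [Function.update_of_ne huv, Function.update_of_ne hwv]
      exact hc u (Finset.mem_erase.2 ⟨huv, huT⟩) w (Finset.mem_erase.2 ⟨hwv, hwT⟩) huw

theorem IsDegenerate.colorable {G : SimpleGraph V} (hG : IsDegenerate G d) :
    G.Colorable (d + 1) := by
  refine SimpleGraph.nonempty_hom_of_forall_finite_subgraph_hom fun G' hfin => ?_
  choose c hc using hG.exists_coloring_on_finset hfin.toFinset
  exact ⟨fun v => c v, fun {u v} huv =>
    hc u (hfin.mem_toFinset.2 u.2) v (hfin.mem_toFinset.2 v.2) huv.adj_sub⟩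

open Finset in
theorem exists_card_filter_rel_le (r : V → V → Prop) [∀ u v, Decidable (r u v)] {T : Finset V}
    (hT : T.Nonempty) (hout : ∀ u ∈ T, #{v ∈ T | r u v} ≤ d) : ∃ v ∈ T, #{u ∈ T | r u v} ≤ d := by
  by_contra! hin
  exact lt_irrefl _ (card_nsmul_lt_card_nsmul_of_lt_of_le' r hT hin hout)

theorem isDegenerate_fromRel (r : V → V → Prop) (hout : ∀ u, {v | r u v}.encard ≤ d) :
    IsDegenerate (SimpleGraph.fromRel r) (2 * d) := by
  classical
  intro T hT
  have hout_filter : ∀ u ∈ T, (T.filter (r u)).card ≤ d := fun u _ => by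
    rw [← ENat.natCast_le_natCast, ← Set.encard_coe_eq_coe_finsetCard, Finset.coe_filter]
    exact (Set.encard_le_encard fun v hv => hv.2).trans (hout u)
  obtain ⟨v, hvT, hin⟩ := exists_card_filter_rel_le r hT hout_filter
  refine ⟨v, hvT, ?_⟩
  calc ((SimpleGraph.fromRel r).neighborSet v ∩ T).encard
      ≤ ({w | r v w} ∪ (T.filter (r · v) : Set V)).encard := by
        refine Set.encard_le_encard fun w ⟨hvw, hwT⟩ => hvw.2.imp id fun hwv => ?_
        exact Finset.mem_coe.2 (Finset.mem_filter.2 ⟨hwT, hwv⟩)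
    _ ≤ {w | r v w}.encard + (T.filter (r · v) : Set V).encard := Set.encard_union_le _ _
    _ ≤ d + d := by
        rw [Set.encard_coe_eq_coe_finsetCard]
        exact add_le_add (hout v) (ENat.natCast_le_natCast.2 hin)
    _ = (2 * d : ℕ) := by rw [two_mul, Nat.cast_add]

end DegenerateGraphs

section PartitionRegularity

variable {ι S : Type*}

theorem encard_biUnion_range_le [Fintype ι] (X : Set (ι → S)) :
    (⋃ a ∈ X, Set.range a).encard ≤ Fintype.card ι * X.encard := by
  have hswap : ⋃ a ∈ X, Set.range a = ⋃ i, (fun a => a i) '' X := by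
    ext y
    simp only [Set.mem_iUnion, Set.mem_range, Set.mem_image, exists_prop]
    tauto
  calc (⋃ a ∈ X, Set.range a).encard
      ≤ ∑ i, ((fun a : ι → S => a i) '' X).encard :=
        hswap ▸ Set.encard_iUnion_le_of_fintype _
    _ ≤ ∑ _i : ι, X.encard := Finset.sum_le_sum fun _ _ => Set.encard_image_le _ _
    _ = Fintype.card ι * X.encard := by rw [Finset.sum_const, Finset.card_univ, nsmul_eq_mul]

theorem encard_last_fiber_le {n : ℕ} (X : Set (Fin (n + 1) → S)) (t : S) :
    {a ∈ X | a (Fin.last n) = t}.encard ≤ {x : Fin n → S | Fin.snoc x t ∈ X}.encard := by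
  have hsub : {a ∈ X | a (Fin.last n) = t} ⊆
      (fun x => Fin.snoc x t) '' {x : Fin n → S | Fin.snoc x t ∈ X} := by
    rintro a ⟨haX, rfl⟩
    have hinit : Fin.snoc (Fin.init a) (a (Fin.last n)) ∈ X := by rwa [Fin.snoc_init_self]
    exact ⟨Fin.init a, hinit, Fin.snoc_init_self a⟩
  exact (Set.encard_le_encard hsub).trans (Set.encard_image_le _ _)

theorem encard_biUnion_range_last_fiber_le {n k : ℕ} {X : Set (Fin (n + 1) → S)} {t : S}
    (hfin : {x : Fin n → S | Fin.snoc x t ∈ X}.Finite)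
    (hcard : {x : Fin n → S | Fin.snoc x t ∈ X}.ncard ≤ k) :
    (⋃ a ∈ {a ∈ X | a (Fin.last n) = t}, Set.range a).encard ≤ ((n + 1) * k : ℕ) :=
  calc (⋃ a ∈ {a ∈ X | a (Fin.last n) = t}, Set.range a).encard
      ≤ Fintype.card (Fin (n + 1)) * {a ∈ X | a (Fin.last n) = t}.encard :=
        encard_biUnion_range_le _
    _ ≤ Fintype.card (Fin (n + 1)) * {x : Fin n → S | Fin.snoc x t ∈ X}.encard := by
        gcongr; exact encard_last_fiber_le X t
    _ ≤ Fintype.card (Fin (n + 1)) * k := by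
        gcongr; rw [← hfin.cast_ncard_eq]; exact_mod_cast hcard
    _ = ((n + 1) * k : ℕ) := by rw [Fintype.card_fin, Nat.cast_mul]

/-- Partition regularity of a system with unknowns indexed by `ι`, given by its set `X` of
solutions: every finite coloring has a monochromatic solution. -/
def IsPartitionRegular (X : Set (ι → S)) : Prop :=
  ∀ (r : ℕ) (c : S → Fin r), ∃ a : ι → S, (∀ i j, c (a i) = c (a j)) ∧ a ∈ X

/-- The ultrafilter `𝒰` witnesses the partition regularity of the system with solution set `X`:
every member of `𝒰` contains all entries of some solution. -/
def IsWitness (X : Set (ι → S)) (𝒰 : Ultrafilter S) : Prop :=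
  ∀ A ∈ 𝒰, ∃ a : ι → S, (∀ i, a i ∈ A) ∧ a ∈ X

theorem exists_preimage_singleton_mem_ultrafilter {κ : Type*} [Finite κ] (𝒰 : Ultrafilter S)
    (c : S → κ) : ∃ q, c ⁻¹' {q} ∈ 𝒰 :=
  Ultrafilter.eventually_exists_iff.1 (.of_forall fun x => ⟨c x, rfl⟩)

theorem IsWitness.isPartitionRegular {X : Set (ι → S)} {𝒰 : Ultrafilter S} (h𝒰 : IsWitness X 𝒰) :
    IsPartitionRegular X := by
  intro r c
  obtain ⟨q, hq⟩ := exists_preimage_singleton_mem_ultrafilter 𝒰 c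
  obtain ⟨a, haq, haX⟩ := h𝒰 _ hq
  exact ⟨a, fun i j => (haq i).trans (haq j).symm, haX⟩

theorem isWitness_pure {X : Set (ι → S)} {x : S} (hx : Function.const ι x ∈ X) :
    IsWitness X (pure x) :=
  fun _ hA => ⟨Function.const ι x, fun _ => hA, hx⟩

theorem exists_coloring_forall_monochromatic_constant {X : Set (ι → S)} {i₀ : ι} {d : ℕ}
    (hX : ∀ t, (⋃ a ∈ {a ∈ X | a i₀ = t}, Set.range a).encard ≤ d) :
    ∃ c : S → Fin (2 * d + 1),
      ∀ a : ι → S, (∀ i j, c (a i) = c (a j)) → a ∈ X → ∀ i j, a i = a j := by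
  let r (t y : S) : Prop := y ∈ ⋃ a ∈ {a ∈ X | a i₀ = t}, Set.range a
  obtain ⟨c⟩ := (isDegenerate_fromRel r hX).colorable
  refine ⟨c, fun a hmono haX => ?_⟩
  have hi₀ : ∀ i, a i = a i₀ := fun i => by
    by_contra hne
    have hrel : r (a i₀) (a i) := Set.mem_biUnion ⟨haX, rfl⟩ (Set.mem_range_self i)
    exact c.valid ⟨Ne.symm hne, Or.inl hrel⟩ (hmono i₀ i)
  exact fun i j => (hi₀ i).trans (hi₀ j).symm

theorem stmt_0_general (X : Set (ι → S)) (i₀ : ι) (d : ℕ)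
    (hX : ∀ t, (⋃ a ∈ {a ∈ X | a i₀ = t}, Set.range a).encard ≤ d) :
    List.TFAE
      [ IsPartitionRegular X,
        (∃ 𝒰, IsWitness X 𝒰) ∧
          ∀ 𝒰, IsWitness X 𝒰 →
            ∃ B ∈ 𝒰, ∀ a : ι → S, (∀ i, a i ∈ B) → a ∈ X → ∀ i j, a i = a j,
        ∃ (r : ℕ) (c₀ : S → Fin r),
          (∃ a : ι → S, (∀ i j, c₀ (a i) = c₀ (a j)) ∧ a ∈ X) ∧
            ∀ a : ι → S, (∀ i j, c₀ (a i) = c₀ (a j)) → a ∈ X → ∀ i j, a i = a j ] := by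
  tfae_have 1 → 3 := fun hPR =>
    let ⟨c, hc⟩ := exists_coloring_forall_monochromatic_constant hX
    ⟨_, c, hPR _ c, hc⟩
  tfae_have 3 → 2 := by
    rintro ⟨r, c, ⟨a, hmono, haX⟩, hconst⟩
    have ha : a = Function.const ι (a i₀) := funext fun i => hconst a hmono haX i i₀
    refine ⟨⟨pure (a i₀), isWitness_pure (ha ▸ haX)⟩, fun 𝒰 _ => ?_⟩
    obtain ⟨q, hq⟩ := exists_preimage_singleton_mem_ultrafilter 𝒰 c
    exact ⟨_, hq, fun b hbq => hconst b fun i j => (hbq i).trans (hbq j).symm⟩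
  tfae_have 2 → 1 := fun ⟨⟨_, h𝒰⟩, _⟩ => h𝒰.isPartitionRegular
  tfae_finish

end PartitionRegularity

/-- Main Theorem: for a system `σ(x₁,…,xₙ,x_{n+1}) = s` whose solutions in the first
`n` variables are uniformly bounded in number (for each fixed value of the last variable),
partition regularity, the witness condition, and the existence of a coloring whose only
monochromatic solutions are constant are all equivalent. -/
theorem stmt_0 {S : Type*} [Infinite S] (n m : ℕ) (s : Fin m → S)
    (σ : (Fin (n + 1) → S) → Fin m → S)
    (hbound : ∃ k : ℕ, ∀ t : S,
      {x : Fin n → S | σ (Fin.snoc x t) = s}.Finite ∧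
      {x : Fin n → S | σ (Fin.snoc x t) = s}.ncard ≤ k) :
    List.TFAE
      [ -- (1) the system is partition regular over `S`
        ∀ (r : ℕ) (c : S → Fin r), ∃ a : Fin (n + 1) → S,
          (∀ i j, c (a i) = c (a j)) ∧ σ a = s,
        -- (2) there is a witness, and every witness contains a set on which all
        -- solutions are constant
        (∃ 𝒰 : Ultrafilter S, ∀ A ∈ 𝒰, ∃ a : Fin (n + 1) → S,
            (∀ i, a i ∈ A) ∧ σ a = s) ∧
          (∀ 𝒰 : Ultrafilter S,
            (∀ A ∈ 𝒰, ∃ a : Fin (n + 1) → S, (∀ i, a i ∈ A) ∧ σ a = s) →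
            ∃ B ∈ 𝒰, ∀ a : Fin (n + 1) → S,
              (∀ i, a i ∈ B) → σ a = s → ∀ i j, a i = a j),
        -- (3) there is a coloring with a monochromatic solution all of whose
        -- monochromatic solutions are constant
        ∃ (r : ℕ) (c₀ : S → Fin r),
          (∃ a : Fin (n + 1) → S, (∀ i j, c₀ (a i) = c₀ (a j)) ∧ σ a = s) ∧
          (∀ a : Fin (n + 1) → S, (∀ i j, c₀ (a i) = c₀ (a j)) → σ a = s →
            ∀ i j, a i = a j) ] := by
  obtain ⟨k, hk⟩ := hbound
  exact stmt_0_general {a | σ a = s} (Fin.last n) ((n + 1) * k) fun t =>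
    encard_biUnion_range_last_fiber_le (hk t).1 (hk t).2
end

section
/- Let S be an infinite set, let n, m ∈ ℕ, let s ∈ S^m, and let σ : S^{n+1} → S^m be a system of functional equations. Suppose there exists k ∈ ℕ such that for every t ∈ S the system σ(x_1,…,x_n,t) = s has at most k solutions (x_1,…,x_n) ∈ S^n. Then for every ultrafilter 𝒰 on S the following are equivalent: (1) 𝒰 is a witness of the partition regularity of σ(x_1,…,x_n,x_{n+1}) = s; (2) the set Δ_σ = { a ∈ S : σ(a,…,a) = s } belongs to 𝒰. -/
/-!
A self-map `g` of any set admits a finite colouring in which every `t` with `g t ≠ t` gets a colour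
different from that of `g t` (Katětov): for a linear order, two colours handle the `t < g t`, by
compactness from finite sets, and two more handle the `g t < t`. Hence every ultrafilter has a
member `B` such that `t ∈ B` and `g t ∈ B` force `g t = t`. If a solution is determined by one of
its coordinates up to `k` choices, then the other coordinates are the values at that one of finitely
many maps `S → S`. Intersecting the corresponding sets `B` gives a member of the ultrafilter in
which every solution is constant.
-/

open Filter Set

section

variable {S ι : Type*}

lemma exists_bool_coloring_finset_of_lt_apply [LinearOrder S] (g : S → S) (T : Finset S) :
    ∃ c : S → Bool, ∀ t ∈ T, t < g t → c t ≠ c (g t) := by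
  induction T using Finset.induction_on_min with
  | empty => simp
  | insert a T ha ih =>
    obtain ⟨c, hc⟩ := ih
    -- As `a` lies below `T`, the constraints at points of `T` do not involve the colour of `a`.
    refine ⟨Function.update c a (!c (g a)), fun t ht hlt ↦ ?_⟩
    obtain rfl | ht := Finset.mem_insert.1 ht
    · simp [Function.update_of_ne hlt.ne']
    · have hat : a < t := ha t ht
      rw [Function.update_of_ne hat.ne', Function.update_of_ne (hat.trans hlt).ne']
      exact hc t ht hlt

lemma exists_bool_coloring_of_lt_apply [LinearOrder S] (g : S → S) :
    ∃ c : S → Bool, ∀ t, t < g t → c t ≠ c (g t) := by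
  choose c hc using exists_bool_coloring_finset_of_lt_apply g
  obtain ⟨χ, hχ⟩ := Finset.rado_selection c
  refine ⟨χ, fun t hlt ↦ ?_⟩
  obtain ⟨T, hT, hχT⟩ := hχ {t, g t}
  rw [hχT t (by simp), hχT (g t) (by simp)]
  exact hc T t (hT (by simp)) hlt

lemma exists_coloring_apply_ne_of_ne (g : S → S) :
    ∃ c : S → Bool × Bool, ∀ t, g t ≠ t → c (g t) ≠ c t := by
  classical
  let _ : LinearOrder S := linearOrderOfSTO WellOrderingRel
  obtain ⟨c, hc⟩ := exists_bool_coloring_of_lt_apply g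
  obtain ⟨d, hd⟩ := exists_bool_coloring_of_lt_apply (S := Sᵒᵈ) g
  refine ⟨fun t ↦ (c t, d t), fun t hne heq ↦ ?_⟩
  obtain ⟨hceq, hdeq⟩ := Prod.mk.inj heq
  obtain hlt | hlt := hne.lt_or_gt
  · exact hd t hlt hdeq.symm
  · exact hc t hlt hceq.symm

lemma exists_mem_ultrafilter_apply_mem_imp_isFixedPt (𝒰 : Ultrafilter S) (g : S → S) :
    ∃ B ∈ 𝒰, ∀ t ∈ B, g t ∈ B → Function.IsFixedPt g t := by
  obtain ⟨c, hc⟩ := exists_coloring_apply_ne_of_ne g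
  obtain ⟨b, hb⟩ := (𝒰.eventually_exists_iff (P := fun b t ↦ c t = b)).1
    (.of_forall fun t ↦ ⟨c t, rfl⟩)
  exact ⟨{t | c t = b}, hb, fun t ht hgt ↦ not_imp_not.1 (hc t) (hgt.trans ht.symm)⟩

lemma exists_mem_ultrafilter_forall_apply_mem_imp_isFixedPt [Finite ι] (𝒰 : Ultrafilter S)
    (g : ι → S → S) : ∃ B ∈ 𝒰, ∀ i, ∀ t ∈ B, g i t ∈ B → Function.IsFixedPt (g i) t := by
  choose B hB hfix using fun i ↦ exists_mem_ultrafilter_apply_mem_imp_isFixedPt 𝒰 (g i)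
  exact ⟨⋂ i, B i, iInter_mem.2 hB, fun i t ht hgt ↦
    hfix i t (mem_iInter.1 ht i) (mem_iInter.1 hgt i)⟩

lemma exists_subset_range_of_encard_le {α : Type*} [Nonempty α] {X : Set α} {k : ℕ}
    (hX : X.encard ≤ k) : ∃ e : Fin k → α, X ⊆ range e := by
  obtain ⟨f, hf, hinj⟩ := (finite_of_encard_le_coe hX).exists_injOn_of_encard_le
    (hX.trans_eq (Nat.encard_range k).symm)
  exact ⟨fun i ↦ Function.invFunOn f X i, fun x hx ↦ ⟨⟨f x, hf hx⟩, hinj.leftInvOn_invFunOn hx⟩⟩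

lemma exists_mem_ultrafilter_forall_eq_const [Finite ι] {R : Set (ι → S)} {i₀ : ι} {k : ℕ}
    {𝒰 : Ultrafilter S} (hR : ∀ᶠ t in 𝒰, {x ∈ R | x i₀ = t}.encard ≤ k) :
    ∃ B ∈ 𝒰, ∀ x ∈ R, (∀ i, x i ∈ B) → x = fun _ ↦ x i₀ := by
  have : Nonempty S := 𝒰.neBot.nonempty
  choose! e he using fun t (ht : {x ∈ R | x i₀ = t}.encard ≤ k) ↦
    exists_subset_range_of_encard_le ht
  obtain ⟨B, hB, hfix⟩ := exists_mem_ultrafilter_forall_apply_mem_imp_isFixedPt 𝒰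
    fun (p : Fin k × ι) t ↦ e t p.1 p.2
  refine ⟨_, inter_mem hR hB, fun x hx hxB ↦ funext fun i ↦ ?_⟩
  obtain ⟨j, hj⟩ : x ∈ range (e (x i₀)) := he _ (hxB i₀).1 ⟨hx, rfl⟩
  have hji : e (x i₀) j i = x i := congrFun hj i
  exact hji.symm.trans (hfix (j, i) (x i₀) (hxB i₀).2 (hji ▸ (hxB i).2))

lemma encard_setOf_apply_last_eq {n : ℕ} (R : Set (Fin (n + 1) → S)) (t : S) :
    {x ∈ R | x (Fin.last n) = t}.encard = {x : Fin n → S | Fin.snoc x t ∈ R}.encard := by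
  have himage : (fun x : Fin n → S ↦ (Fin.snoc x t : Fin (n + 1) → S)) ''
      {x | Fin.snoc x t ∈ R} = {x ∈ R | x (Fin.last n) = t} := by
    ext x
    constructor
    · rintro ⟨y, hy, rfl⟩
      exact ⟨hy, Fin.snoc_last ..⟩
    · rintro ⟨hx, rfl⟩
      exact ⟨Fin.init x, by simpa using hx, Fin.snoc_init_self x⟩
  rw [← himage, (Fin.snoc_left_injective (α := fun _ ↦ S) t).encard_image]

theorem stmt_2_general [Finite ι] {R : Set (ι → S)} {i₀ : ι} {k : ℕ} {𝒰 : Ultrafilter S}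
    (hR : ∀ᶠ t in 𝒰, {x ∈ R | x i₀ = t}.encard ≤ k) :
    (∀ A ∈ 𝒰, ∃ x : ι → S, (∀ i, x i ∈ A) ∧ x ∈ R) ↔ {a : S | (fun _ ↦ a) ∈ R} ∈ 𝒰 := by
  constructor
  · intro hwitness
    obtain ⟨B, hB, hconst⟩ := exists_mem_ultrafilter_forall_eq_const hR
    by_contra hdiag
    obtain ⟨x, hxA, hx⟩ := hwitness _ (inter_mem (Ultrafilter.compl_mem_iff_notMem.2 hdiag) hB)
    have hx_const : x = fun _ ↦ x i₀ := hconst x hx fun i ↦ (hxA i).2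
    exact (hxA i₀).1 (hx_const ▸ hx :)
  · intro hdiag A hA
    obtain ⟨a, haA, ha⟩ := 𝒰.nonempty_of_mem (inter_mem hA hdiag)
    exact ⟨fun _ ↦ a, fun _ ↦ haA, ha⟩

end


/-- For a system `σ(x₁,…,xₙ,x_{n+1}) = s` whose solutions in the first `n` variables are
uniformly bounded in number (for each fixed value of the last variable), an ultrafilter
`𝒰` on `S` witnesses the partition regularity of the system if and only if the set
`Δ_σ = {a ∈ S | σ(a,…,a) = s}` belongs to `𝒰`. -/
theorem stmt_2 {S : Type*} [Infinite S] (n m : ℕ) (s : Fin m → S)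
    (σ : (Fin (n + 1) → S) → Fin m → S)
    (hbound : ∃ k : ℕ, ∀ t : S,
      {x : Fin n → S | σ (Fin.snoc x t) = s}.Finite ∧
      {x : Fin n → S | σ (Fin.snoc x t) = s}.ncard ≤ k)
    (𝒰 : Ultrafilter S) :
    (∀ A ∈ 𝒰, ∃ a : Fin (n + 1) → S, (∀ i, a i ∈ A) ∧ σ a = s) ↔
      {a : S | σ (fun _ => a) = s} ∈ 𝒰 := by
  obtain ⟨k, hk⟩ := hbound
  exact stmt_2_general (R := {x | σ x = s}) (.of_forall fun t ↦
    (encard_setOf_apply_last_eq _ t).trans_le (encard_le_coe_iff_finite_ncard_le.2 (hk t)))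
end

section
/- Let P_1,…,P_m ∈ ℤ[x,y] be polynomials in two variables each of degree at least 1, and consider the system of equations P_1(x,y) = 0, …, P_m(x,y) = 0. The following are equivalent: (1) the system has a constant solution in the positive integers, i.e., there exists a ∈ ℕ with a ≥ 1 and P_i(a,a) = 0 for all i ∈ {1,…,m}; (2) the system is partition regular over the positive integers. -/
open MvPolynomial

/-!
If every polynomial of the system is zero, every point is a constant solution; otherwise it suffices
to treat one nonzero polynomial `p`. Replacing it by `p(x, y) p(y, x)` makes its zero set symmetric,
so that its nonconstant zeros are the edges of a graph. The polynomial
`p(·, a)` has at most `deg p` zeros unless `a` is one of the finitely many zeros of the leading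
coefficient of `p` in its first variable, so all but finitely many vertices have bounded degree.
Giving each exceptional vertex a colour of its own and colouring the others greedily along a
well-order, one gets a finite proper colouring, whose monochromatic zeros are all constant.
-/

section Coloring

variable {V : Type*} {G : SimpleGraph V} {d : ℕ}

theorem colorable_of_encard_neighborSet_inter_Iio_le [LinearOrder V] [WellFoundedLT V]
    (h : ∀ v, (G.neighborSet v ∩ Set.Iio v).encard ≤ d) : G.Colorable (d + 1) := by
  have exists_free_color (v : V) (g : Set.Iio v → Fin (d + 1)) :
      ∃ x, ∀ w : Set.Iio v, G.Adj v w → g w ≠ x := by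
    by_contra! hg
    have image_eq_univ : g '' {w | G.Adj v w} = Set.univ := Set.eq_univ_of_forall hg
    have card_le : ((d + 1 : ℕ) : ℕ∞) ≤ d :=
      calc ((d + 1 : ℕ) : ℕ∞) = (g '' {w | G.Adj v w}).encard := by simp [image_eq_univ]
        _ ≤ {w : Set.Iio v | G.Adj v w}.encard := Set.encard_image_le _ _
        _ = (Subtype.val '' {w : Set.Iio v | G.Adj v w}).encard :=
          (Subtype.val_injective.encard_image _).symm
        _ ≤ (G.neighborSet v ∩ Set.Iio v).encard :=
          Set.encard_le_encard (by rintro _ ⟨w, hw, rfl⟩; exact ⟨hw, w.2⟩)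
        _ ≤ d := h v
    exact Nat.not_succ_le_self d (by exact_mod_cast card_le)
  choose pick pick_ne using exists_free_color
  let c : V → Fin (d + 1) := WellFoundedLT.fix fun v ih => pick v fun w => ih w w.2
  have c_eq (v : V) : c v = pick v fun w => c w := WellFoundedLT.fix_eq _ v
  have c_ne_of_lt {v w : V} (hlt : w < v) (hadj : G.Adj v w) : c w ≠ c v := by
    rw [c_eq v]
    exact pick_ne v (fun u => c u) ⟨w, hlt⟩ hadj
  refine ⟨.mk c fun {v w} hadj => ?_⟩
  rcases hadj.ne.lt_or_gt with hlt | hlt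
  · exact c_ne_of_lt hlt hadj.symm
  · exact (c_ne_of_lt hlt hadj).symm

theorem colorable_of_encard_neighborSet_le (h : ∀ v, (G.neighborSet v).encard ≤ d) :
    G.Colorable (d + 1) := by
  obtain ⟨_, _⟩ := exists_wellFoundedLT V
  exact colorable_of_encard_neighborSet_inter_Iio_le fun v =>
    (Set.encard_le_encard Set.inter_subset_left).trans (h v)

theorem colorable_ncard_add_of_colorable_induce_compl {s : Set V} (hs : s.Finite)
    (h : (G.induce sᶜ).Colorable d) : G.Colorable (s.ncard + d) := by
  classical
  have := hs.fintype
  obtain ⟨c⟩ := h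
  let c' : G.Coloring (s ⊕ Fin d) :=
    .mk (fun v => if hv : v ∈ s then .inl ⟨v, hv⟩ else .inr (c ⟨v, hv⟩)) fun {v w} hadj => by
      by_cases hv : v ∈ s <;> by_cases hw : w ∈ s
      · simpa [hv, hw] using hadj.ne
      · simp [hv, hw]
      · simp [hv, hw]
      · simpa [hv, hw] using c.valid (v := ⟨v, hv⟩) (w := ⟨w, hw⟩) hadj
  simpa only [Fintype.card_sum, Fintype.card_fin, Set.fintypeCard_eq_ncard] using c'.colorable

theorem colorable_of_encard_neighborSet_le_of_notMem {s : Set V} (hs : s.Finite)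
    (h : ∀ v ∉ s, (G.neighborSet v).encard ≤ d) : G.Colorable (s.ncard + (d + 1)) := by
  refine colorable_ncard_add_of_colorable_induce_compl hs
    (colorable_of_encard_neighborSet_le fun v => ?_)
  calc ((G.induce sᶜ).neighborSet v).encard
      = (Subtype.val '' (G.induce sᶜ).neighborSet v).encard :=
        (Subtype.val_injective.encard_image _).symm
    _ ≤ (G.neighborSet v).encard :=
        Set.encard_le_encard (by rintro _ ⟨w, hw, rfl⟩; exact hw)
    _ ≤ d := h v v.2

end Coloring

section Zeros

variable {R : Type*} [CommRing R] [IsDomain R]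

theorem encard_setOf_eval_cons_eq_zero_le {n : ℕ} {p : MvPolynomial (Fin (n + 1)) R}
    {a : Fin n → R} (ha : eval a (finSuccEquiv R n p).leadingCoeff ≠ 0) :
    {b | eval (Fin.cons b a : Fin (n + 1) → R) p = 0}.encard ≤ p.degreeOf 0 := by
  classical
  set q := (finSuccEquiv R n p).map (eval a) with hq
  have q_ne_zero : q ≠ 0 := fun h0 =>
    ha (by simpa [hq] using congrArg (Polynomial.coeff · (finSuccEquiv R n p).natDegree) h0)
  have zeros_eq : {b | eval (Fin.cons b a : Fin (n + 1) → R) p = 0} = q.roots.toFinset := by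
    ext b
    simp [q_ne_zero, eval_eq_eval_mv_eval', ← hq]
  rw [zeros_eq, Set.encard_coe_eq_coe_finsetCard, ← natDegree_finSuccEquiv]
  exact_mod_cast (Multiset.toFinset_card_le _).trans
    ((Polynomial.card_roots' q).trans Polynomial.natDegree_map_le)

theorem finite_setOf_eval_singleton_eq_zero {p : MvPolynomial (Fin 1) R} (hp : p ≠ 0) :
    {a | eval ![a] p = 0}.Finite := by
  refine Set.finite_of_encard_le_coe (encard_setOf_eval_cons_eq_zero_le (a := ![]) ?_)
  rw [eq_C_of_isEmpty (finSuccEquiv R 0 p).leadingCoeff, eval_C]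
  intro h0
  apply hp
  simpa [h0] using eq_C_of_isEmpty (finSuccEquiv R 0 p).leadingCoeff

theorem finite_setOf_degreeOf_lt_encard_zeros {p : MvPolynomial (Fin 2) R} (hp : p ≠ 0) :
    {a | (p.degreeOf 0 : ℕ∞) < {b | eval ![b, a] p = 0}.encard}.Finite := by
  have leadingCoeff_ne_zero : (finSuccEquiv R 1 p).leadingCoeff ≠ 0 := by simpa using hp
  refine (finite_setOf_eval_singleton_eq_zero leadingCoeff_ne_zero).subset fun a ha => ?_
  by_contra h0
  exact ha.not_ge (encard_setOf_eval_cons_eq_zero_le h0)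

end Zeros

section ZeroGraph

variable {R : Type*} [CommRing R]

/-- The graph on `R` joining distinct `a` and `b` when `p(a, b) = 0` or `p(b, a) = 0`. Its proper
colourings are the colourings of `R` for which every monochromatic zero of `p` is constant. -/
def zeroGraph (p : MvPolynomial (Fin 2) R) : SimpleGraph R :=
  .fromRel fun a b => eval ![a, b] p = 0

theorem eval_rename_swap (p : MvPolynomial (Fin 2) R) (a b : R) :
    eval ![a, b] (rename (Equiv.swap 0 1) p) = eval ![b, a] p := by
  rw [eval_rename]
  congr 2
  ext i
  fin_cases i <;> simp

theorem exists_colorable_zeroGraph [IsDomain R] {p : MvPolynomial (Fin 2) R} (hp : p ≠ 0) :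
    ∃ n, (zeroGraph p).Colorable n := by
  let q := p * rename (Equiv.swap 0 1) p
  have q_ne_zero : q ≠ 0 :=
    mul_ne_zero hp ((rename_injective _ (Equiv.injective _)).ne_iff' (map_zero _) |>.2 hp)
  have neighborSet_subset (a : R) : (zeroGraph p).neighborSet a ⊆ {b | eval ![b, a] q = 0} := by
    rintro b ⟨-, hab⟩
    simpa [q, eval_rename_swap, or_comm] using hab
  refine ⟨_, colorable_of_encard_neighborSet_le_of_notMem (d := q.degreeOf 0)
    (finite_setOf_degreeOf_lt_encard_zeros q_ne_zero) fun a ha => ?_⟩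
  exact (Set.encard_le_encard (neighborSet_subset a)).trans (not_lt.mp ha)

end ZeroGraph

theorem stmt_4_general {R α ι : Type*} [CommRing R] [IsDomain R] (f : α → R) (s : Set α)
    (P : ι → MvPolynomial (Fin 2) R) :
    (∃ a, a ∈ s ∧ ∀ i, eval ![f a, f a] (P i) = 0) ↔
      ∀ (r : ℕ) (c : α → Fin r), ∃ a b, a ∈ s ∧ b ∈ s ∧ c a = c b ∧
        ∀ i, eval ![f a, f b] (P i) = 0 := by
  refine ⟨fun ⟨a, ha, hP⟩ r c => ⟨a, a, ha, ha, rfl, hP⟩, fun h => ?_⟩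
  by_cases hP : ∀ i, P i = 0
  · obtain ⟨a, -, ha, -⟩ := h 1 0
    exact ⟨a, ha, fun i => by simp [hP i]⟩
  · obtain ⟨i, hi⟩ := not_forall.mp hP
    obtain ⟨n, ⟨c⟩⟩ := exists_colorable_zeroGraph hi
    obtain ⟨a, b, ha, -, hc, hab⟩ := h n (c ∘ f)
    have f_eq : f a = f b := by
      by_contra hne
      exact c.valid ⟨hne, Or.inl (hab i)⟩ hc
    exact ⟨a, ha, by simpa only [← f_eq] using hab⟩

/-- A system of polynomial equations `P₁(x,y) = 0, …, P_m(x,y) = 0` with `Pᵢ ∈ ℤ[x,y]`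
nonconstant is partition regular over the positive integers if and only if it has a
constant solution in the positive integers. -/
theorem stmt_4 (m : ℕ) (P : Fin m → MvPolynomial (Fin 2) ℤ)
    (hdeg : ∀ i, 1 ≤ (P i).totalDegree) :
    (∃ a : ℕ, 0 < a ∧ ∀ i, eval ![(a : ℤ), (a : ℤ)] (P i) = 0) ↔
      ∀ (r : ℕ) (c : ℕ → Fin r), ∃ a b : ℕ, 0 < a ∧ 0 < b ∧ c a = c b ∧
        ∀ i, eval ![(a : ℤ), (b : ℤ)] (P i) = 0 :=
  stmt_4_general Nat.cast (Set.Ioi 0) P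
end

section
/- Let R be an infinite integral domain, let S ⊆ R be an infinite subset, and let P_1,…,P_m ∈ R[x,y] be nonconstant polynomials in two variables over R. The following are equivalent: (1) the system P_1(x,y) = 0, …, P_m(x,y) = 0 has a constant solution in S, i.e., there exists a ∈ S with P_i(a,a) = 0 for all i; (2) the system is partition regular on S. -/
/-!
Suppose the system has no constant solution in `S`. Join distinct `a, b ∈ S` by an edge when
`(a, b)` or `(b, a)` is a common zero. Since some `P i` does not vanish at `(a, a)`, neither
`P i (a, Y)` nor `P i (X, a)` is the zero polynomial, so `a` has at most `2 * deg (P i)` neighbours.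
Moreover the degree here is bounded independently of `a`: for a fixed `i₀` with `P i₀ (T, T) ≠ 0`,
all but finitely many `a` admit the choice `i = i₀`. A graph of bounded degree is finitely
colourable, greedily along a well-order, and such a colouring has no monochromatic solution.
-/

open MvPolynomial

section GreedyColoring

variable {V : Type*}

theorem colorable_of_forall_encard_adj_lt_le (G : SimpleGraph V) [LinearOrder V] [WellFoundedLT V]
    {d : ℕ} (h : ∀ v, {w | w < v ∧ G.Adj v w}.encard ≤ d) : G.Colorable (d + 1) := by
  have exists_free_color (v : V) (c : ∀ w < v, Fin (d + 1)) :
      ∃ k, ∀ w (hw : w < v), G.Adj v w → k ≠ c w hw := by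
    let used : Set (Fin (d + 1)) :=
      (fun w : {w // w < v ∧ G.Adj v w} ↦ c w w.2.1) '' Set.univ
    have used_card : used.encard ≤ d :=
      (Set.encard_image_le _ _).trans ((Set.encard_univ _).trans_le (h v))
    have used_ne_univ : used ≠ Set.univ := by
      intro heq
      rw [heq, Set.encard_univ, ENat.card_eq_coe_fintype_card, Fintype.card_fin] at used_card
      exact Nat.not_succ_le_self d (Nat.cast_le.mp used_card)
    obtain ⟨k, hk⟩ := (Set.ne_univ_iff_exists_notMem _).mp used_ne_univ
    exact ⟨k, fun w hw hadj heq ↦ hk ⟨⟨w, hw, hadj⟩, Set.mem_univ _, heq.symm⟩⟩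
  choose freeColor freeColor_ne using exists_free_color
  let c : V → Fin (d + 1) := WellFounded.fix wellFounded_lt freeColor
  have c_ne_of_lt {v w : V} (hw : w < v) (hadj : G.Adj v w) : c v ≠ c w := by
    have hc : c v = freeColor v fun w _ ↦ c w := WellFounded.fix_eq _ _ _
    exact hc ▸ freeColor_ne v _ w hw hadj
  refine ⟨.mk c fun {v w} hadj ↦ ?_⟩
  rcases hadj.ne.lt_or_gt with hvw | hwv
  · exact (c_ne_of_lt hvw hadj.symm).symm
  · exact c_ne_of_lt hwv hadj

theorem colorable_of_forall_encard_neighborSet_le (G : SimpleGraph V) {d : ℕ}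
    (h : ∀ v, (G.neighborSet v).encard ≤ d) : G.Colorable (d + 1) := by
  obtain ⟨_, _⟩ := exists_wellFoundedLT V
  exact colorable_of_forall_encard_adj_lt_le G fun v ↦
    (Set.encard_le_encard fun _ hw ↦ hw.2).trans (h v)

theorem exists_coloring_ne_of_rel {rel : V → V → Prop} {m n : ℕ} (hirrefl : ∀ v, ¬ rel v v)
    (hout : ∀ v, {w | rel v w}.encard ≤ m) (hin : ∀ v, {w | rel w v}.encard ≤ n) :
    ∃ c : V → Fin (m + n + 1), ∀ v w, rel v w → c v ≠ c w := by
  have hdeg (v : V) : ((SimpleGraph.fromRel rel).neighborSet v).encard ≤ (m + n : ℕ) := calc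
    _ ≤ ({w | rel v w} ∪ {w | rel w v}).encard := Set.encard_le_encard fun _ hw ↦ hw.2
    _ ≤ {w | rel v w}.encard + {w | rel w v}.encard := Set.encard_union_le _ _
    _ ≤ m + n := add_le_add (hout v) (hin v)
    _ = (m + n : ℕ) := (Nat.cast_add m n).symm
  obtain ⟨c⟩ := colorable_of_forall_encard_neighborSet_le _ hdeg
  exact ⟨c, fun v w hvw ↦ c.valid ⟨fun heq ↦ hirrefl v (heq ▸ hvw), .inl hvw⟩⟩

end GreedyColoring

section PolynomialCurve

theorem polynomial_eval_aeval {R σ : Type*} [CommSemiring R] (P : MvPolynomial σ R)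
    (f : σ → Polynomial R) (t : R) :
    (aeval f P).eval t = eval (fun j ↦ (f j).eval t) P := by
  have hcomp : (Polynomial.evalRingHom t).comp (algebraMap R (Polynomial R)) = RingHom.id R := by
    ext; simp
  rw [← Polynomial.coe_evalRingHom, map_aeval, hcomp]
  rfl

variable {R : Type*} [CommRing R] [IsDomain R]

theorem encard_setOf_eval_curve_eq_zero_le {σ : Type*} (P : MvPolynomial σ R)
    {f : σ → Polynomial R} {d : ℕ} (hf : ∀ j, (f j).natDegree ≤ d) {t₀ : R}
    (ht₀ : eval (fun j ↦ (f j).eval t₀) P ≠ 0) :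
    {t | eval (fun j ↦ (f j).eval t) P = 0}.encard ≤ (P.totalDegree * d : ℕ) := by
  classical
  have hne : aeval f P ≠ 0 := by
    intro h0
    exact ht₀ (by rw [← polynomial_eval_aeval, h0, Polynomial.eval_zero])
  have hroots : {t | eval (fun j ↦ (f j).eval t) P = 0} = ((aeval f P).roots.toFinset : Set R) := by
    ext t
    simp [hne, polynomial_eval_aeval]
  rw [hroots, Set.encard_coe_eq_coe_finsetCard, Nat.cast_le]
  calc
    _ ≤ (aeval f P).roots.card := Multiset.toFinset_card_le _
    _ ≤ (aeval f P).natDegree := Polynomial.card_roots' _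
    _ ≤ P.totalDegree * d := aeval_natDegree_le P le_rfl f hf

theorem encard_setOf_eval_pair_right_eq_zero_le (P : MvPolynomial (Fin 2) R) {a b₀ : R}
    (h : eval ![a, b₀] P ≠ 0) : {b | eval ![a, b] P = 0}.encard ≤ P.totalDegree := by
  have hline (b : R) : ![a, b] = fun j ↦ (![Polynomial.C a, Polynomial.X] j).eval b := by
    ext j; fin_cases j <;> simp
  simp only [hline] at h ⊢
  simpa only [mul_one] using encard_setOf_eval_curve_eq_zero_le P
    (d := 1) (fun j ↦ by fin_cases j <;> simp) h

theorem encard_setOf_eval_pair_left_eq_zero_le (P : MvPolynomial (Fin 2) R) {a₀ b : R}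
    (h : eval ![a₀, b] P ≠ 0) : {a | eval ![a, b] P = 0}.encard ≤ P.totalDegree := by
  have hline (a : R) : ![a, b] = fun j ↦ (![Polynomial.X, Polynomial.C b] j).eval a := by
    ext j; fin_cases j <;> simp
  simp only [hline] at h ⊢
  simpa only [mul_one] using encard_setOf_eval_curve_eq_zero_le P
    (d := 1) (fun j ↦ by fin_cases j <;> simp) h

theorem exists_finset_forall_exists_eval_ne_zero {ι : Type*} {q : ι → Polynomial R} {A : Set R}
    (h : ∀ a ∈ A, ∃ i, (q i).eval a ≠ 0) :
    ∃ s : Finset ι, ∀ a ∈ A, ∃ i ∈ s, (q i).eval a ≠ 0 := by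
  classical
  rcases A.eq_empty_or_nonempty with rfl | ⟨a₀, ha₀⟩
  · exact ⟨∅, by simp⟩
  obtain ⟨i₀, hi₀⟩ := h a₀ ha₀
  have : Nonempty ι := ⟨i₀⟩
  choose! i hi using h
  refine ⟨insert i₀ ((q i₀).roots.toFinset.image i), fun a ha ↦ ?_⟩
  by_cases hroot : (q i₀).eval a = 0
  · have hne : q i₀ ≠ 0 := fun h0 ↦ hi₀ (by simp [h0])
    have hmem : a ∈ (q i₀).roots.toFinset := by simp [hne, hroot]
    exact ⟨i a, Finset.mem_insert_of_mem (Finset.mem_image_of_mem i hmem), hi a ha⟩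
  · exact ⟨i₀, Finset.mem_insert_self _ _, hroot⟩

end PolynomialCurve

section PartitionRegularity

variable {R : Type*} [CommRing R] [IsDomain R] {ι : Type*} {S : Set R}
  {P : ι → MvPolynomial (Fin 2) R}

theorem exists_totalDegree_bound_of_forall_exists_eval_diag_ne_zero
    (h : ∀ a ∈ S, ∃ i, eval ![a, a] (P i) ≠ 0) :
    ∃ D, ∀ a ∈ S, ∃ i, (P i).totalDegree ≤ D ∧ eval ![a, a] (P i) ≠ 0 := by
  have hdiag (a : R) (i : ι) :
      eval ![a, a] (P i) = (aeval (fun _ ↦ Polynomial.X) (P i) : Polynomial R).eval a := by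
    rw [polynomial_eval_aeval]
    congr 2
    ext j; fin_cases j <;> simp
  simp only [hdiag] at h ⊢
  obtain ⟨s, hs⟩ := exists_finset_forall_exists_eval_ne_zero h
  refine ⟨s.sup fun i ↦ (P i).totalDegree, fun a ha ↦ ?_⟩
  obtain ⟨i, his, hi⟩ := hs a ha
  exact ⟨i, Finset.le_sup (f := fun i ↦ (P i).totalDegree) his, hi⟩

theorem exists_coloring_forall_exists_eval_ne_zero (h : ∀ a ∈ S, ∃ i, eval ![a, a] (P i) ≠ 0) :
    ∃ (r : ℕ) (c : S → Fin r), ∀ a b : S, c a = c b → ∃ i, eval ![(a : R), (b : R)] (P i) ≠ 0 := by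
  obtain ⟨D, hD⟩ := exists_totalDegree_bound_of_forall_exists_eval_diag_ne_zero h
  let rel (a b : S) : Prop := ∀ i, eval ![(a : R), (b : R)] (P i) = 0
  have hirrefl (a : S) : ¬ rel a a := not_forall.mpr (h a a.2)
  have hout (a : S) : {b | rel a b}.encard ≤ D := by
    obtain ⟨i, hdeg, hi⟩ := hD a a.2
    calc
      {b | rel a b}.encard ≤ (Subtype.val ⁻¹' {b | eval ![(a : R), b] (P i) = 0} : Set S).encard :=
        Set.encard_le_encard fun _ hb ↦ hb i
      _ ≤ {b | eval ![(a : R), b] (P i) = 0}.encard := Set.encard_preimage_val_le_encard_right _ _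
      _ ≤ (P i).totalDegree := encard_setOf_eval_pair_right_eq_zero_le (P i) hi
      _ ≤ D := Nat.cast_le.mpr hdeg
  have hin (b : S) : {a | rel a b}.encard ≤ D := by
    obtain ⟨i, hdeg, hi⟩ := hD b b.2
    calc
      {a | rel a b}.encard ≤ (Subtype.val ⁻¹' {a | eval ![a, (b : R)] (P i) = 0} : Set S).encard :=
        Set.encard_le_encard fun _ ha ↦ ha i
      _ ≤ {a | eval ![a, (b : R)] (P i) = 0}.encard := Set.encard_preimage_val_le_encard_right _ _
      _ ≤ (P i).totalDegree := encard_setOf_eval_pair_left_eq_zero_le (P i) hi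
      _ ≤ D := Nat.cast_le.mpr hdeg
  obtain ⟨c, hc⟩ := exists_coloring_ne_of_rel hirrefl hout hin
  exact ⟨_, c, fun a b hab ↦ not_forall.mp fun hrel ↦ hc a b hrel hab⟩

end PartitionRegularity

theorem stmt_5_general {R ι : Type*} [CommRing R] [IsDomain R] (S : Set R)
    (P : ι → MvPolynomial (Fin 2) R) :
    (∃ a ∈ S, ∀ i, eval ![a, a] (P i) = 0) ↔
      ∀ (r : ℕ) (c : S → Fin r), ∃ a b : S, c a = c b ∧
        ∀ i, eval ![(a : R), (b : R)] (P i) = 0 := by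
  constructor
  · rintro ⟨a, ha, hzero⟩ r c
    exact ⟨⟨a, ha⟩, ⟨a, ha⟩, rfl, hzero⟩
  · intro hregular
    by_contra! hdiag
    obtain ⟨r, c, hc⟩ := exists_coloring_forall_exists_eval_ne_zero hdiag
    obtain ⟨a, b, hab, hzero⟩ := hregular r c
    obtain ⟨i, hi⟩ := hc a b hab
    exact hi (hzero i)

/-- For an infinite integral domain `R`, an infinite subset `S ⊆ R`, and nonconstant
polynomials `P₁,…,P_m ∈ R[x,y]`, the system `P₁(x,y) = 0, …, P_m(x,y) = 0` has a
constant solution in `S` if and only if it is partition regular on `S`. -/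
theorem stmt_5 {R : Type*} [CommRing R] [IsDomain R] [Infinite R]
    (S : Set R) (hS : S.Infinite) (m : ℕ) (P : Fin m → MvPolynomial (Fin 2) R)
    (hdeg : ∀ i, 1 ≤ (P i).totalDegree) :
    (∃ a ∈ S, ∀ i, eval ![a, a] (P i) = 0) ↔
      ∀ (r : ℕ) (c : S → Fin r), ∃ a b : S, c a = c b ∧
        ∀ i, eval ![(a : R), (b : R)] (P i) = 0 :=
  stmt_5_general S P
end

section
/- Let P ∈ ℤ[x,y] be an irreducible polynomial in two variables of degree at least 1. If the equation P(x,y) = 0 is infinitely partition regular over the positive integers, then P = x − y or P = y − x (i.e., P is a unit multiple of x − y in ℤ[x,y]). In particular, x − y is the only irreducible infinitely partition regular polynomial in two variables up to sign. -/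
open MvPolynomial

/-!
Suppose `x - y` does not divide `P`. Join `m ≠ n` by an edge if `P(m, n) = 0` or `P(n, m) = 0`. For
all but finitely many `n` the univariate polynomials `P(n, y)` and `P(x, n)` are nonzero, so `n` has
at most `2 deg P` neighbours; each of the finitely many exceptional `n` has at most `n` neighbours
below it. Hence the number of smaller neighbours of a vertex is bounded, and a greedy colouring with
finitely many colours leaves only the diagonal solutions `P(n, n) = 0`. These are finitely many
because `P(x, x) ≠ 0`.
-/

section GreedyColoring

variable {α β : Type*}

lemma exists_forall_apply_ne_of_enatCard_lt (h : ENat.card α < ENat.card β) (f : α → β) :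
    ∃ b, ∀ a, f a ≠ b := by
  by_contra! hf
  exact h.not_ge (ENat.card_le_card_of_injective (Function.injective_surjInv hf))

theorem colorable_of_encard_setOf_lt_adj_le [LinearOrder α] [WellFoundedLT α] {G : SimpleGraph α}
    {k : ℕ} (hG : ∀ v, {w | w < v ∧ G.Adj v w}.encard ≤ k) : G.Colorable (k + 1) := by
  have hcard (v : α) : ENat.card {w | w < v ∧ G.Adj v w} < ENat.card (Fin (k + 1)) := by
    simpa using (hG v).trans_lt (Nat.cast_lt.2 k.lt_succ_self)
  choose pick hpick using fun v ↦ exists_forall_apply_ne_of_enatCard_lt (hcard v)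
  let c : α → Fin (k + 1) := wellFounded_lt.fix fun v c ↦ pick v fun w ↦ c w w.2.1
  have hc (v w : α) (hlt : w < v) (hadj : G.Adj v w) : c w ≠ c v := by
    rw [show c v = pick v fun w ↦ c w from wellFounded_lt.fix_eq _ v]
    exact hpick v (fun w ↦ c w) ⟨w, hlt, hadj⟩
  refine ⟨SimpleGraph.Coloring.mk c fun {v w} hadj ↦ ?_⟩
  rcases hadj.ne.lt_or_gt with hlt | hgt
  · exact hc w v hlt hadj.symm
  · exact (hc v w hgt hadj).symm

end GreedyColoring

section Bivariate

open scoped Polynomial.Bivariate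
open Polynomial (evalRingHom)
open Polynomial.Bivariate (equivMvPolynomial swap)

variable {R : Type*} [CommRing R]

lemma eval_eval_X (f : R[X][Y]) (a : R) : (f.eval Polynomial.X).eval a = f.evalEval a a := by
  simpa [Polynomial.eval₂_evalRingHom] using
    (Polynomial.eval₂_hom (p := f) (evalRingHom a) Polynomial.X).symm

lemma eval_equivMvPolynomial (f : R[X][Y]) (a b : R) :
    eval ![a, b] (equivMvPolynomial R f) = f.evalEval a b := by
  have h : (eval ![a, b]).comp (equivMvPolynomial R : R[X][Y] →+* MvPolynomial (Fin 2) R) =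
      Polynomial.evalEvalRingHom a b := by
    ext <;> simp
  exact DFunLike.congr_fun h f

lemma X_sub_X_dvd_equivMvPolynomial_iff {f : R[X][Y]} :
    X 0 - X 1 ∣ equivMvPolynomial R f ↔ Y - Polynomial.C Polynomial.X ∣ f := by
  rw [← map_dvd_iff (equivMvPolynomial R), map_sub, Polynomial.Bivariate.equivMvPolynomial_X,
    Polynomial.Bivariate.equivMvPolynomial_C_X, ← neg_dvd, neg_sub]

lemma evalEval_swap (f : R[X][Y]) (a b : R) : (swap f).evalEval a b = f.evalEval b a := by
  simpa only [Polynomial.coe_aevalAeval_eq_evalEval] using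
    Polynomial.Bivariate.aevalAeval_swap a b f

/-- The graph on `ℕ` joining distinct `m` and `n` when `f(m, n) = 0` or `f(n, m) = 0`. A colouring
of `ℕ` is proper for it exactly when all monochromatic solutions of `f(x, y) = 0` are diagonal. -/
def solutionGraph (f : R[X][Y]) : SimpleGraph ℕ :=
  SimpleGraph.fromRel fun m n ↦ f.evalEval (m : R) n = 0

variable [IsDomain R]

lemma encard_setOf_isRoot_le {p : Polynomial R} (hp : p ≠ 0) :
    {x | p.IsRoot x}.encard ≤ p.natDegree := by
  classical
  have hroots : {x | p.IsRoot x} = p.roots.toFinset := by ext; simp [hp]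
  rw [hroots, Set.encard_coe_eq_coe_finsetCard, Nat.cast_le]
  exact (Multiset.toFinset_card_le _).trans p.card_roots'

lemma finite_setOf_map_evalRingHom_eq_zero {f : R[X][Y]} (hf : f ≠ 0) :
    {a | f.map (evalRingHom a) = 0}.Finite := by
  refine (Polynomial.finite_setOfPred_isRoot (Polynomial.leadingCoeff_ne_zero.2 hf)).subset
    fun a ha ↦ ?_
  simpa using congrArg (Polynomial.coeff · f.natDegree) ha

variable [CharZero R]

lemma finite_setOf_evalEval_diag_eq_zero {f : R[X][Y]} (hf : ¬ Y - Polynomial.C Polynomial.X ∣ f) :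
    {n : ℕ | f.evalEval (n : R) n = 0}.Finite := by
  rw [Polynomial.dvd_iff_isRoot, Polynomial.IsRoot.def] at hf
  refine ((Polynomial.finite_setOfPred_isRoot hf).preimage Nat.cast_injective.injOn).subset
    fun n hn ↦ ?_
  exact (eval_eval_X f n).trans hn

lemma exists_encard_setOf_lt_evalEval_eq_zero_le {f : R[X][Y]} (hf : f ≠ 0) :
    ∃ k : ℕ, ∀ n : ℕ, {m : ℕ | m < n ∧ f.evalEval (n : R) m = 0}.encard ≤ k := by
  obtain ⟨M, hM⟩ := ((finite_setOf_map_evalRingHom_eq_zero hf).preimage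
    (Nat.cast_injective (R := R)).injOn).bddAbove
  refine ⟨max M f.natDegree, fun n ↦ ?_⟩
  by_cases hn : f.map (evalRingHom (n : R)) = 0
  · calc {m : ℕ | m < n ∧ f.evalEval (n : R) m = 0}.encard
        ≤ {m | m < n}.encard := Set.encard_le_encard fun m hm ↦ hm.1
      _ = n := Set.Nat.encard_range n
      _ ≤ _ := by exact_mod_cast (hM hn).trans (le_max_left _ _)
  · calc {m : ℕ | m < n ∧ f.evalEval (n : R) m = 0}.encard
        ≤ {b | (f.map (evalRingHom (n : R))).IsRoot b}.encard :=
          Set.encard_le_encard_of_injOn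
            (fun m hm ↦ (Polynomial.map_evalRingHom_eval _ _ f).trans hm.2)
            Nat.cast_injective.injOn
      _ ≤ (f.map (evalRingHom (n : R))).natDegree := encard_setOf_isRoot_le hn
      _ ≤ _ := by exact_mod_cast Polynomial.natDegree_map_le.trans (le_max_right _ _)

theorem exists_colorable_solutionGraph {f : R[X][Y]} (hf : f ≠ 0) :
    ∃ k, (solutionGraph f).Colorable k := by
  have hswap : swap f ≠ 0 := by simpa using hf
  obtain ⟨k, hk⟩ := exists_encard_setOf_lt_evalEval_eq_zero_le hf
  obtain ⟨l, hl⟩ := exists_encard_setOf_lt_evalEval_eq_zero_le hswap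
  refine ⟨k + l + 1, colorable_of_encard_setOf_lt_adj_le fun n ↦ ?_⟩
  calc {m | m < n ∧ (solutionGraph f).Adj n m}.encard
      ≤ ({m : ℕ | m < n ∧ f.evalEval (n : R) m = 0} ∪
          {m : ℕ | m < n ∧ (swap f).evalEval (n : R) m = 0}).encard := by
        refine Set.encard_le_encard ?_
        rintro m ⟨hlt, -, hzero | hzero⟩
        · exact .inl ⟨hlt, hzero⟩
        · exact .inr ⟨hlt, (evalEval_swap f _ _).trans hzero⟩
    _ ≤ _ := Set.encard_union_le _ _
    _ ≤ _ := by exact_mod_cast add_le_add (hk n) (hl n)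

theorem exists_coloring_finite_setOf_evalEval_eq_zero {f : R[X][Y]}
    (hf : ¬ Y - Polynomial.C Polynomial.X ∣ f) :
    ∃ (r : ℕ) (c : ℕ → Fin r),
      {p : ℕ × ℕ | c p.1 = c p.2 ∧ f.evalEval (p.1 : R) p.2 = 0}.Finite := by
  have hf₀ : f ≠ 0 := by rintro rfl; exact hf (dvd_zero _)
  obtain ⟨r, ⟨c⟩⟩ := exists_colorable_solutionGraph hf₀
  refine ⟨r, c, ((finite_setOf_evalEval_diag_eq_zero hf).image fun n ↦ (n, n)).subset ?_⟩
  rintro ⟨m, n⟩ ⟨hc, hzero⟩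
  obtain rfl : m = n := by
    by_contra hne
    exact c.valid ⟨hne, .inl hzero⟩ hc
  exact ⟨m, hzero, rfl⟩

end Bivariate

section PartitionRegular

variable {R : Type*} [CommRing R]

/-- Infinite partition regularity over the positive integers of the equation `P(x, y) = 0`, for
coefficients in a commutative ring `R`: natural numbers are evaluated through the cast `ℕ → R`. -/
def IsInfinitelyPartitionRegular (P : MvPolynomial (Fin 2) R) : Prop :=
  ∀ (r : ℕ) (c : ℕ → Fin r), {p : ℕ × ℕ | 0 < p.1 ∧ 0 < p.2 ∧ c p.1 = c p.2 ∧
    eval ![(p.1 : R), (p.2 : R)] P = 0}.Infinite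

lemma isInfinitelyPartitionRegular_of_X_sub_X_dvd {P : MvPolynomial (Fin 2) R}
    (hP : X 0 - X 1 ∣ P) : IsInfinitelyPartitionRegular P := by
  intro r c
  refine (Set.infinite_range_of_injective (f := fun n : ℕ ↦ (n + 1, n + 1)) fun m n h ↦ ?_).mono ?_
  · simpa using h
  · rintro _ ⟨n, rfl⟩
    obtain ⟨Q, rfl⟩ := hP
    simp

lemma IsInfinitelyPartitionRegular.X_sub_X_dvd [IsDomain R] [CharZero R]
    {P : MvPolynomial (Fin 2) R} (hP : IsInfinitelyPartitionRegular P) : X 0 - X 1 ∣ P := by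
  obtain ⟨f, rfl⟩ := (Polynomial.Bivariate.equivMvPolynomial R).surjective P
  by_contra hdvd
  rw [X_sub_X_dvd_equivMvPolynomial_iff] at hdvd
  obtain ⟨r, c, hfin⟩ := exists_coloring_finite_setOf_evalEval_eq_zero hdvd
  refine hP r c (hfin.subset ?_)
  rintro p ⟨-, -, hc, hzero⟩
  exact ⟨hc, (eval_equivMvPolynomial f _ _).symm.trans hzero⟩

theorem stmt_7_general [IsDomain R] [CharZero R] {P : MvPolynomial (Fin 2) R} :
    IsInfinitelyPartitionRegular P ↔ X 0 - X 1 ∣ P :=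
  ⟨IsInfinitelyPartitionRegular.X_sub_X_dvd, isInfinitelyPartitionRegular_of_X_sub_X_dvd⟩

end PartitionRegular

section Irreducible

variable {σ : Type*}

lemma not_isUnit_X_sub_X {R : Type*} [CommRing R] [Nontrivial R] (i j : σ) :
    ¬ IsUnit (X i - X j : MvPolynomial σ R) := fun h ↦ by
  simpa using h.map (eval 0)

lemma associated_iff_eq_or_eq_neg {p q : MvPolynomial σ ℤ} :
    Associated p q ↔ p = q ∨ p = -q := by
  refine ⟨?_, ?_⟩
  · rintro ⟨u, rfl⟩
    obtain ⟨a, ha, hu⟩ := isUnit_iff_eq_C_of_isReduced.1 u.isUnit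
    rcases Int.isUnit_iff.1 ha with rfl | rfl <;> simp [hu]
  · rintro (rfl | rfl)
    · exact .rfl
    · exact .neg_left .rfl

end Irreducible

/-- If `P ∈ ℤ[x,y]` is irreducible of degree at least one and the equation `P(x,y) = 0`
is infinitely partition regular over the positive integers, then `P = x - y` or
`P = y - x`. -/
theorem stmt_7 (P : MvPolynomial (Fin 2) ℤ) (hirr : Irreducible P)
    (hdeg : 1 ≤ P.totalDegree)
    (hPR : ∀ (r : ℕ) (c : ℕ → Fin r),
      {p : ℕ × ℕ | 0 < p.1 ∧ 0 < p.2 ∧ c p.1 = c p.2 ∧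
        eval ![(p.1 : ℤ), (p.2 : ℤ)] P = 0}.Infinite) :
    P = X 0 - X 1 ∨ P = X 1 - X 0 := by
  have hassoc := (hirr.dvd_iff.1 (stmt_7_general.1 hPR)).resolve_left (not_isUnit_X_sub_X 0 1)
  simpa only [neg_sub] using associated_iff_eq_or_eq_neg.1 hassoc
end

section
/- Let Γ be a finitely generated subgroup of the multiplicative group ℂˣ of nonzero complex numbers. Then there exist r ∈ ℕ and a coloring c : Γ → {1,…,r} such that every c-monochromatic triple x, y, z ∈ Γ satisfying x + z = 2y (in ℂ) has x = y = z. In particular, Γ contains no nonconstant monochromatic 3-term arithmetic progression for this coloring. -/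
/-!
Dividing a progression by its middle term gives a solution of `u + v = 2` in a finitely generated
group `Γ`. By compactness (Rado's selection lemma) finite sets of progressions suffice if
the number of colors is uniform, and for a finite set the group can be specialized to the units of a
number field `K` without creating new constant progressions.

In `K`, embed pairs of `S`-units logarithmically. For two solutions of `u + v = 2` whose logarithmic
vectors are large and nearly parallel, the product formula applied to their difference shows that
one vector is much longer than the other; applied to `u⁻¹ + v⁻¹ - 2`, it bounds the nonzero vectors
from below. After dividing by `[K : ℚ]` the constants do not depend on `K` or `S`. The vectors that
arise span a space whose dimension is bounded in terms of `Γ`, so by covering the unit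
sphere they split into boundedly many lacunary sequences and a bounded part. On each piece some
linear functional `l` stays at distance at least `1 / 4` from the integers. Coloring group elements
by the values of these `l` modulo `1` then excludes monochromatic progressions, because equal colors
would put `l` of the logarithmic vector close to an integer.
-/

open Metric MeasureTheory Module
open scoped NNReal

section Covering

variable {E : Type*} [NormedAddCommGroup E] [NormedSpace ℝ E]

theorem card_le_of_isSeparated_of_subset_closedBall [FiniteDimensional ℝ E] {r ε : ℝ≥0}
    (hε : 0 < ε) {s : Finset E} (hs : (s : Set E) ⊆ closedBall 0 r)
    (hsep : IsSeparated ε (s : Set E)) : (s.card : ℝ) ≤ (1 + 2 * r / ε) ^ finrank ℝ E := by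
  borelize E
  let μ : Measure E := Measure.addHaar
  have hε' : (0 : ℝ) < ε := hε
  have hdisj : (s : Set E).PairwiseDisjoint fun p ↦ ball p (ε / 2 : ℝ) := fun p hp q hq hpq ↦
    ball_disjoint_ball <| by
      have hlt : (ε : ENNReal) < edist p q := hsep hp hq hpq
      rw [edist_nndist, ENNReal.coe_lt_coe] at hlt
      linarith [show (ε : ℝ) < dist p q from hlt]
  have hsub : (⋃ p ∈ s, ball p (ε / 2 : ℝ)) ⊆ ball 0 (r + ε / 2 : ℝ) :=
    Set.iUnion₂_subset fun p hp ↦ ball_subset_ball' <| by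
      linarith [mem_closedBall.1 (hs hp)]
  have hball (x : E) {ρ : ℝ} (hρ : 0 < ρ) :
      μ.real (ball x ρ) = ρ ^ finrank ℝ E * μ.real (ball 0 1) := by
    simp [measureReal_def, μ.addHaar_ball_of_pos x hρ, pow_nonneg hρ.le]
  have hvol : (s.card : ℝ) * ((ε / 2 : ℝ) ^ finrank ℝ E * μ.real (ball 0 1)) ≤
      (r + ε / 2 : ℝ) ^ finrank ℝ E * μ.real (ball 0 1) := by
    calc _ = ∑ p ∈ s, μ.real (ball p (ε / 2 : ℝ)) := by
          simp [hball _ (half_pos hε')]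
      _ = μ.real (⋃ p ∈ s, ball p (ε / 2 : ℝ)) :=
          (measureReal_biUnion_finset hdisj fun _ _ ↦ measurableSet_ball).symm
      _ ≤ μ.real (ball 0 (r + ε / 2 : ℝ)) := measureReal_mono hsub measure_ball_lt_top.ne
      _ = _ := hball 0 (by positivity)
  have hunit : 0 < μ.real (ball (0 : E) 1) :=
    ENNReal.toReal_pos (measure_ball_pos μ _ one_pos).ne' measure_ball_lt_top.ne
  rw [← mul_assoc, mul_le_mul_iff_left₀ hunit, ← le_div_iff₀ (by positivity), ← div_pow] at hvol
  rwa [show (1 + 2 * r / ε : ℝ) = (r + ε / 2) / (ε / 2) by field_simp; ring]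

theorem packingNumber_closedBall_le [FiniteDimensional ℝ E] {r ε : ℝ≥0} (hε : 0 < ε) :
    packingNumber ε (closedBall (0 : E) r) ≤ ⌊(1 + 2 * r / ε : ℝ) ^ finrank ℝ E⌋₊ := by
  refine iSup_le fun C ↦ iSup₂_le fun hC hsep ↦ ?_
  by_contra! hlt
  obtain ⟨t, htC, ht⟩ := Set.exists_subset_encard_eq (Order.add_one_le_of_lt hlt)
  have hfin : t.Finite := Set.finite_of_encard_eq_coe (by exact_mod_cast ht)
  lift t to Finset E using hfin
  have hcard := card_le_of_isSeparated_of_subset_closedBall hε (htC.trans hC) (hsep.subset htC)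
  rw [Set.encard_coe_eq_coe_finsetCard] at ht
  have := Nat.le_floor hcard
  have : t.card = ⌊(1 + 2 * r / ε : ℝ) ^ finrank ℝ E⌋₊ + 1 := by exact_mod_cast ht
  omega

theorem coveringNumber_submodule_inter_closedBall_le (W : Submodule ℝ E) [FiniteDimensional ℝ W]
    {r ε : ℝ≥0} (hε : 0 < ε) :
    coveringNumber ε ((W : Set E) ∩ closedBall 0 r) ≤ ⌊(1 + 2 * r / ε : ℝ) ^ finrank ℝ W⌋₊ := by
  have himage : W.subtype '' closedBall 0 r = (W : Set E) ∩ closedBall 0 r := by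
    ext; simp [and_comm]
  rw [← himage, Isometry.coveringNumber_image (f := W.subtype) W.subtypeₗᵢ.isometry]
  exact (coveringNumber_le_packingNumber ε _).trans (packingNumber_closedBall_le hε)

end Covering

theorem exists_coloring_dist_le {X : Type*} [PseudoMetricSpace X] {A : Set X} {ε : ℝ≥0} {N : ℕ}
    (h : coveringNumber ε A ≤ N) :
    ∃ c : X → Fin (N + 1), ∀ x ∈ A, ∀ y ∈ A, c x = c y → dist x y ≤ 2 * ε := by
  classical
  obtain ⟨C, -, hfin, hcover, hcard⟩ :=
    exists_set_encard_eq_coveringNumber (h.trans_lt (ENat.natCast_lt_top N)).ne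
  lift C to Finset X using hfin
  rw [← hcard, Set.encard_coe_eq_coe_finsetCard, Nat.cast_le] at h
  have hnear : ∀ x ∈ A, ∃ z ∈ C, dist x z ≤ (ε : ℝ) := fun x hx ↦ by
    obtain ⟨z, hz, hxz⟩ := hcover hx
    exact ⟨z, hz, edist_le_coe.1 hxz⟩
  choose! center hmem hdist using hnear
  have hemb : Nonempty (Option {z // z ∈ C} ↪ Fin (N + 1)) :=
    Function.Embedding.nonempty_of_card_le (by simpa using h)
  obtain ⟨e⟩ := hemb
  refine ⟨fun x ↦ e (if hx : center x ∈ C then some ⟨_, hx⟩ else none), fun x hx y hy hxy ↦ ?_⟩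
  have hcenter : center x = center y := by
    simpa [hmem x hx, hmem y hy] using e.injective hxy
  calc dist x y ≤ dist x (center x) + dist y (center x) := dist_triangle_right ..
    _ ≤ 2 * ε := by rw [two_mul]; exact add_le_add (hdist x hx) (hcenter ▸ hdist y hy)

theorem exists_coloring_dist_le_of_compactSpace (X : Type*) [PseudoMetricSpace X] [CompactSpace X]
    {ε : ℝ} (hε : 0 < ε) : ∃ (n : ℕ) (c : X → Fin n), ∀ x y, c x = c y → dist x y ≤ ε := by
  lift ε to ℝ≥0 using hε.le
  obtain ⟨C, hsub, hfin, hcover⟩ := exists_finite_isCover_of_isCompact (ε := ε / 2)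
    (half_pos (NNReal.coe_pos.1 hε)).ne' (isCompact_univ (X := X))
  obtain ⟨c, hc⟩ := exists_coloring_dist_le (N := C.ncard)
    ((hcover.coveringNumber_le_encard hsub).trans_eq hfin.cast_ncard_eq.symm)
  exact ⟨_, c, fun x y hxy ↦ by simpa [mul_div_cancel₀] using hc x trivial y trivial hxy⟩

section Circle

theorem unitAddCircle_norm_coe_le_abs (x : ℝ) : ‖(x : UnitAddCircle)‖ ≤ |x| := by
  rw [UnitAddCircle.norm_eq]
  simpa using round_le x 0

theorem quarter_le_norm_of_norm_sub_half_le {x : ℝ}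
    (h : ‖((x - 1 / 2 : ℝ) : UnitAddCircle)‖ ≤ 1 / 4) : 1 / 4 ≤ ‖(x : UnitAddCircle)‖ := by
  have hhalf : ‖((1 / 2 : ℝ) : UnitAddCircle)‖ = 1 / 2 := by
    simpa using AddCircle.norm_half_period_eq (p := (1 : ℝ))
  have := norm_sub_norm_le ((1 / 2 : ℝ) : UnitAddCircle) (((1 / 2 : ℝ) : UnitAddCircle) - x)
  rw [sub_sub_cancel, norm_sub_rev, ← AddCircle.coe_sub] at this
  linarith

end Circle

section Dual

variable {E : Type*} [NormedAddCommGroup E] [NormedSpace ℝ E]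

theorem exists_dual_add_apply_eq_half (l : StrongDual ℝ E) {q : E} (hq : q ≠ 0) :
    ∃ g : StrongDual ℝ E, ‖g‖ ≤ 1 / (2 * ‖q‖) ∧
      (((l + g) q - 1 / 2 : ℝ) : UnitAddCircle) = 0 := by
  obtain ⟨f, hf, hfq⟩ := exists_dual_vector ℝ q (norm_ne_zero_iff.2 hq)
  set x := l q - 1 / 2 with hx
  have hq' := norm_ne_zero_iff.2 hq
  refine ⟨((round x - x) / ‖q‖) • f, ?_, ?_⟩
  · rw [norm_smul, hf, mul_one, norm_div, norm_norm, Real.norm_eq_abs, abs_sub_comm, ← div_div]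
    exact div_le_div_of_nonneg_right (abs_sub_round x) (norm_nonneg q)
  · have happly : (l + ((round x - x) / ‖q‖) • f) q - 1 / 2 = (round x : ℝ) := by
      simp only [add_apply, smul_apply, hfq, smul_eq_mul,
        RCLike.ofReal_real_eq_id, id, div_mul_cancel₀ _ hq']
      linarith
    rw [happly]
    exact AddCircle.coe_eq_zero_iff _ |>.2 ⟨round x, by simp⟩

/- The points are treated by increasing norm: correcting `l` so that it takes the value `1 / 2` at
a new point `q` moves its value at an earlier `p` by at most `‖p‖ / (2 * ‖q‖)`, and the bound on the
total error telescopes. -/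
theorem exists_dual_norm_sub_half_le_of_lacunary {b M : ℝ} (hb : 1 < b) (A : Finset E)
    (h0 : ∀ p ∈ A, p ≠ 0)
    (hlac : (A : Set E).Pairwise fun p q ↦ b * ‖p‖ ≤ ‖q‖ ∨ b * ‖q‖ ≤ ‖p‖)
    (hM : ∀ p ∈ A, ‖p‖ ≤ M) :
    ∃ l : StrongDual ℝ E, ∀ p ∈ A,
      ‖((l p - 1 / 2 : ℝ) : UnitAddCircle)‖ ≤ (1 - ‖p‖ / M) / (2 * (b - 1)) := by
  classical
  induction A using Finset.induction_on_max_value (norm : E → ℝ) generalizing M with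
  | empty => exact ⟨0, by simp⟩
  | insert q A hqA hmax ih =>
    have hb' : 0 < b - 1 := sub_pos.2 hb
    have hq : 0 < ‖q‖ := norm_pos_iff.2 (h0 q (by simp))
    have hqM : ‖q‖ ≤ M := hM q (by simp)
    have hle : ∀ p ∈ A, ‖p‖ ≤ ‖q‖ / b := fun p hp ↦ by
      rw [le_div_iff₀' (by linarith)]
      exact (hlac (by simp [hp]) (by simp) (ne_of_mem_of_not_mem hp hqA)).resolve_right
        fun h ↦ (h.trans (hmax p hp)).not_gt (lt_mul_of_one_lt_left hq hb)
    obtain ⟨l, hl⟩ := ih (fun p hp ↦ h0 p (by simp [hp])) (hlac.mono (by simp)) hle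
    obtain ⟨g, hg, hgq⟩ := exists_dual_add_apply_eq_half l (norm_pos_iff.1 hq)
    refine ⟨l + g, fun p hp ↦ ?_⟩
    rcases Finset.mem_insert.1 hp with rfl | hp
    · rw [hgq, norm_zero]
      have : ‖p‖ / M ≤ 1 := div_le_one_of_le₀ hqM (hq.le.trans hqM)
      exact div_nonneg (by linarith) (by linarith)
    calc ‖(((l + g) p - 1 / 2 : ℝ) : UnitAddCircle)‖
        = ‖((l p - 1 / 2 : ℝ) : UnitAddCircle) + (g p : UnitAddCircle)‖ := by
          rw [← AddCircle.coe_add, add_apply]; congr 2; ring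
      _ ≤ (1 - ‖p‖ / (‖q‖ / b)) / (2 * (b - 1)) + 1 / (2 * ‖q‖) * ‖p‖ :=
          norm_add_le_of_le (hl p hp)
            ((unitAddCircle_norm_coe_le_abs _).trans (g.le_of_opNorm_le hg p))
      _ = (1 - ‖p‖ / ‖q‖) / (2 * (b - 1)) := by field_simp; ring
      _ ≤ (1 - ‖p‖ / M) / (2 * (b - 1)) := by gcongr

theorem exists_dual_quarter_le_of_lacunary (A : Finset E) (h0 : ∀ p ∈ A, p ≠ 0)
    (hlac : (A : Set E).Pairwise fun p q ↦ 3 * ‖p‖ ≤ ‖q‖ ∨ 3 * ‖q‖ ≤ ‖p‖) :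
    ∃ l : StrongDual ℝ E, ∀ p ∈ A, 1 / 4 ≤ ‖(l p : UnitAddCircle)‖ := by
  have hM : ∀ p ∈ A, ‖p‖ ≤ ∑ q ∈ A, ‖q‖ := fun p hp ↦
    Finset.single_le_sum (f := fun q : E ↦ ‖q‖) (fun q _ ↦ norm_nonneg q) hp
  obtain ⟨l, hl⟩ := exists_dual_norm_sub_half_le_of_lacunary (by norm_num) A h0 hlac hM
  refine ⟨l, fun p hp ↦ quarter_le_norm_of_norm_sub_half_le ((hl p hp).trans ?_)⟩
  have : 0 ≤ ‖p‖ / ∑ q ∈ A, ‖q‖ := by positivity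
  linarith

theorem exists_dual_quarter_le_of_dist_le {p₀ : E} {δ : ℝ} (hp₀ : p₀ ≠ 0) (hδ : δ ≤ ‖p₀‖) :
    ∃ l : StrongDual ℝ E, ∀ p, dist p p₀ ≤ δ / 2 → 1 / 4 ≤ ‖(l p : UnitAddCircle)‖ := by
  obtain ⟨g, hg, hgp⟩ := exists_dual_add_apply_eq_half 0 hp₀
  refine ⟨g, fun p hp ↦ quarter_le_norm_of_norm_sub_half_le ?_⟩
  rw [zero_add] at hgp
  have : 0 < ‖p₀‖ := norm_pos_iff.2 hp₀
  calc ‖((g p - 1 / 2 : ℝ) : UnitAddCircle)‖ = ‖(g (p - p₀) : UnitAddCircle)‖ := by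
        rw [← sub_zero ((g p - 1 / 2 : ℝ) : UnitAddCircle), ← hgp, ← AddCircle.coe_sub, map_sub]
        congr 2; ring
    _ ≤ 1 / (2 * ‖p₀‖) * ‖p - p₀‖ :=
        (unitAddCircle_norm_coe_le_abs _).trans (g.le_of_opNorm_le hg _)
    _ ≤ 1 / (2 * ‖p₀‖) * (‖p₀‖ / 2) := by
        rw [← dist_eq_norm]
        gcongr
        linarith
    _ = 1 / 4 := by field_simp; norm_num

end Dual

theorem pow_mul_le_of_floor_logb_modEq {b x y : ℝ} {k : ℕ} (hb : 1 < b) (hx : 0 < x)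
    (hxy : b * x ≤ y) (hmod : ⌊Real.logb b x⌋ ≡ ⌊Real.logb b y⌋ [ZMOD (k + 1 : ℕ)]) :
    b ^ k * x ≤ y := by
  have hb₀ : 0 < b := one_pos.trans hb
  have hy : 0 < y := (mul_pos hb₀ hx).trans_le hxy
  have hlog : Real.logb b x + 1 ≤ Real.logb b y := by
    have := Real.logb_le_logb_of_le hb (mul_pos hb₀ hx) hxy
    rwa [Real.logb_mul hb₀.ne' hx.ne', Real.logb_self_eq_one hb, add_comm] at this
  have hfloor : ⌊Real.logb b x⌋ + 1 ≤ ⌊Real.logb b y⌋ := by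
    rw [← Int.floor_add_one]
    exact Int.floor_le_floor hlog
  have hjump : ((k + 1 : ℕ) : ℤ) ≤ ⌊Real.logb b y⌋ - ⌊Real.logb b x⌋ :=
    Int.le_of_dvd (by omega) hmod.dvd
  have hjump' : (k : ℝ) + 1 ≤ ⌊Real.logb b y⌋ - ⌊Real.logb b x⌋ := by exact_mod_cast hjump
  have hlogk : k + Real.logb b x ≤ Real.logb b y := by
    linarith [Int.lt_floor_add_one (Real.logb b x), Int.floor_le (Real.logb b y)]
  rwa [← Real.logb_le_logb hb (by positivity) hy, Real.logb_mul (by positivity) hx.ne',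
    Real.logb_pow, Real.logb_self_eq_one hb, mul_one]

universe u

theorem exists_coloring_submodule_dist_le (m : ℕ) (r : ℝ) {ε : ℝ} (hε : 0 < ε) :
    ∃ n : ℕ, ∀ (E : Type u) [NormedAddCommGroup E] [NormedSpace ℝ E] (W : Submodule ℝ E)
      [FiniteDimensional ℝ W], finrank ℝ W ≤ m → ∃ c : E → Fin n,
        ∀ x ∈ W, ‖x‖ ≤ r → ∀ y ∈ W, ‖y‖ ≤ r → c x = c y → dist x y ≤ ε := by
  lift ε to ℝ≥0 using hε.le
  let N := ⌊(1 + 2 * r.toNNReal / (ε / 2 : ℝ≥0) : ℝ) ^ m⌋₊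
  refine ⟨N + 1, fun E _ _ W _ hW ↦ ?_⟩
  have hcover : coveringNumber (ε / 2) ((W : Set E) ∩ closedBall 0 r.toNNReal) ≤ N := by
    refine (coveringNumber_submodule_inter_closedBall_le W (half_pos (by exact_mod_cast hε))).trans
      (Nat.cast_le.2 (Nat.floor_le_floor (pow_le_pow_right₀ ?_ hW)))
    exact le_add_of_nonneg_right (by positivity)
  obtain ⟨c, hc⟩ := exists_coloring_dist_le hcover
  have hmem {x : E} (hx : x ∈ W) (hxr : ‖x‖ ≤ r) :
      x ∈ (W : Set E) ∩ closedBall 0 r.toNNReal :=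
    ⟨hx, mem_closedBall_zero_iff.2 (hxr.trans (Real.le_coe_toNNReal r))⟩
  refine ⟨c, fun x hx hxr y hy hyr hxy ↦ ?_⟩
  simpa [mul_div_cancel₀] using hc x (hmem hx hxr) y (hmem hy hyr) hxy

theorem exists_duals_quarter_le_of_norm_le (m : ℕ) (R : ℝ) {δ : ℝ} (hδ : 0 < δ) :
    ∃ n : ℕ, ∀ (E : Type u) [NormedAddCommGroup E] [NormedSpace ℝ E] (W : Submodule ℝ E)
      [FiniteDimensional ℝ W], finrank ℝ W ≤ m → ∃ l : Fin n → StrongDual ℝ E,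
        ∀ p ∈ W, δ ≤ ‖p‖ → ‖p‖ ≤ R → ∃ i, 1 / 4 ≤ ‖(l i p : UnitAddCircle)‖ := by
  obtain ⟨n, hn⟩ := exists_coloring_submodule_dist_le.{u} m R (half_pos hδ)
  refine ⟨n, fun E _ _ W _ hW ↦ ?_⟩
  obtain ⟨c, hc⟩ := hn E W hW
  have hcell : ∀ i, ∃ l : StrongDual ℝ E, ∀ p ∈ W, δ ≤ ‖p‖ → ‖p‖ ≤ R → c p = i →
      1 / 4 ≤ ‖(l p : UnitAddCircle)‖ := fun i ↦ by
    by_cases hex : ∃ p₀ ∈ W, δ ≤ ‖p₀‖ ∧ ‖p₀‖ ≤ R ∧ c p₀ = i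
    · obtain ⟨p₀, hp₀, hδp₀, hRp₀, rfl⟩ := hex
      obtain ⟨l, hl⟩ := exists_dual_quarter_le_of_dist_le
        (norm_pos_iff.1 (hδ.trans_le hδp₀)) hδp₀
      exact ⟨l, fun p hp _ hRp hcp ↦ hl p (hc p hp hRp p₀ hp₀ hRp₀ hcp)⟩
    · exact ⟨0, fun p hp hδp hRp hcp ↦ (hex ⟨p, hp, hδp, hRp, hcp⟩).elim⟩
  choose l hl using hcell
  exact ⟨l, fun p hp hδp hRp ↦ ⟨c p, hl _ p hp hδp hRp rfl⟩⟩

theorem exists_duals_quarter_le_of_separated (m : ℕ) {b η : ℝ} (hb : 1 < b) (hη : 0 < η) :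
    ∃ (ι : Type) (_ : Finite ι), ∀ (E : Type u) [NormedAddCommGroup E] [NormedSpace ℝ E]
      (A : Finset E), (∀ p ∈ A, p ≠ 0) → finrank ℝ (Submodule.span ℝ (A : Set E)) ≤ m →
      (∀ p ∈ A, ∀ q ∈ A, p ≠ q → ‖p‖ ≤ ‖q‖ → dist (‖p‖⁻¹ • p) (‖q‖⁻¹ • q) ≤ η → b * ‖p‖ ≤ ‖q‖) →
      ∃ l : ι → StrongDual ℝ E, ∀ p ∈ A, ∃ i, 1 / 4 ≤ ‖(l i p : UnitAddCircle)‖ := by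
  classical
  obtain ⟨n, hn⟩ := exists_coloring_submodule_dist_le.{u} m 1 hη
  obtain ⟨k, hk⟩ := pow_unbounded_of_one_lt 3 hb
  refine ⟨Fin n × ZMod (k + 1), inferInstance, fun E _ _ A h0 hA hsep ↦ ?_⟩
  obtain ⟨c, hc⟩ := hn E _ hA
  let cell (p : E) : Fin n × ZMod (k + 1) := (c (‖p‖⁻¹ • p), (⌊Real.logb b ‖p‖⌋ : ZMod (k + 1)))
  have hlac {p q : E} (hp : p ∈ A) (hq : q ∈ A) (hpq : p ≠ q) (hle : ‖p‖ ≤ ‖q‖)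
      (hcell : cell p = cell q) : 3 * ‖p‖ ≤ ‖q‖ := by
    have hunit {x : E} (hx : x ∈ A) : ‖x‖⁻¹ • x ∈ Submodule.span ℝ (A : Set E) ∧
        ‖‖x‖⁻¹ • x‖ ≤ 1 :=
      ⟨Submodule.smul_mem _ _ (Submodule.subset_span hx), (norm_smul_inv_norm (h0 x hx)).le⟩
    have hdir := hc _ (hunit hp).1 (hunit hp).2 _ (hunit hq).1 (hunit hq).2
      (congrArg Prod.fst hcell)
    have hmod := (ZMod.intCast_eq_intCast_iff _ _ _).1 (congrArg Prod.snd hcell)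
    refine le_trans ?_ (pow_mul_le_of_floor_logb_modEq hb (norm_pos_iff.2 (h0 p hp))
      (hsep p hp q hq hpq hle hdir) hmod)
    gcongr
  have hclass (i) := exists_dual_quarter_le_of_lacunary {p ∈ A | cell p = i}
    (fun p hp ↦ h0 p (Finset.mem_filter.1 hp).1) fun p hp q hq hpq ↦ by
      simp only [Finset.coe_filter, Set.mem_ofPred_eq] at hp hq
      exact (le_total ‖p‖ ‖q‖).imp (hlac hp.1 hq.1 hpq · (hp.2.trans hq.2.symm))
        (hlac hq.1 hp.1 hpq.symm · (hq.2.trans hp.2.symm))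
  choose l hl using hclass
  exact ⟨l, fun p hp ↦ ⟨cell p, hl _ p (by simp [hp])⟩⟩

/-- A set of vectors of norm at least `δ` in which large vectors pointing in nearly the same
direction have very different norms. This is the shape of the image of the solutions of a unit
equation under the logarithmic embedding. The gap is encoded by comparing `q` with `t • p` for
`t ∈ [1, 3 / 2]`: if `q` is close to such a multiple of `p`, then `‖p‖` is bounded in terms of
`C`. -/
structure IsGapSet {E : Type*} [NormedAddCommGroup E] [NormedSpace ℝ E] (C δ : ℝ) (A : Set E) :
    Prop where
  le_norm : ∀ p ∈ A, δ ≤ ‖p‖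
  norm_le : ∀ p ∈ A, ∀ q ∈ A, p ≠ q → ∀ t ∈ Set.Icc (1 : ℝ) (3 / 2), ‖p‖ ≤ C + 8 * ‖q - t • p‖

namespace IsGapSet

theorem mono {E : Type*} [NormedAddCommGroup E] [NormedSpace ℝ E] {C δ : ℝ} {A B : Set E}
    (hB : IsGapSet C δ B) (hAB : A ⊆ B) : IsGapSet C δ A where
  le_norm p hp := hB.le_norm p (hAB hp)
  norm_le p hp q hq := hB.norm_le p (hAB hp) q (hAB hq)

theorem three_halves_mul_norm_le {E : Type*} [NormedAddCommGroup E] [NormedSpace ℝ E]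
    {C δ : ℝ} {A : Set E} (hA : IsGapSet C δ A) {p q : E} (hp : p ∈ A) (hq : q ∈ A) (hpq : p ≠ q)
    (hp₀ : 0 < ‖p‖) (hC : 2 * C < ‖p‖) (hle : ‖p‖ ≤ ‖q‖)
    (hdir : dist (‖p‖⁻¹ • p) (‖q‖⁻¹ • q) ≤ 1 / 24) : 3 / 2 * ‖p‖ ≤ ‖q‖ := by
  by_contra! hlt
  have hq₀ : 0 < ‖q‖ := hp₀.trans_le hle
  have hgap := hA.norm_le p hp q hq hpq (‖q‖ / ‖p‖)
    ⟨(one_le_div₀ hp₀).2 hle, (div_le_iff₀ hp₀).2 hlt.le⟩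
  have hscale : ‖q - (‖q‖ / ‖p‖) • p‖ = ‖q‖ * dist (‖p‖⁻¹ • p) (‖q‖⁻¹ • q) := by
    rw [dist_comm, dist_eq_norm, ← norm_norm q, ← norm_smul, norm_norm, smul_sub,
      smul_inv_smul₀ hq₀.ne', smul_smul, div_eq_mul_inv]
  rw [hscale] at hgap
  nlinarith

theorem exists_duals_quarter_le (m : ℕ) (C : ℝ) {δ : ℝ} (hδ : 0 < δ) :
    ∃ (ι : Type) (_ : Finite ι), ∀ (E : Type u) [NormedAddCommGroup E] [NormedSpace ℝ E]
      (A : Finset E), IsGapSet C δ (A : Set E) →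
      finrank ℝ (Submodule.span ℝ (A : Set E)) ≤ m →
      ∃ l : ι → StrongDual ℝ E, ∀ p ∈ A, ∃ i, 1 / 4 ≤ ‖(l i p : UnitAddCircle)‖ := by
  classical
  obtain ⟨n, hsmall⟩ := exists_duals_quarter_le_of_norm_le.{u} m (2 * C) hδ
  obtain ⟨ι, _, hlarge⟩ := exists_duals_quarter_le_of_separated.{u} m
    (b := 3 / 2) (η := 1 / 24) (by norm_num) (by norm_num)
  refine ⟨Fin n ⊕ ι, inferInstance, fun E _ _ A hA hm ↦ ?_⟩
  have hpos {p : E} (hp : p ∈ A) : 0 < ‖p‖ := hδ.trans_le (hA.le_norm p hp)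
  let B : Finset E := {p ∈ A | 2 * C < ‖p‖}
  have hB {p : E} (hp : p ∈ B) : p ∈ A ∧ 2 * C < ‖p‖ := Finset.mem_filter.1 hp
  obtain ⟨l₁, hl₁⟩ := hsmall E _ hm
  obtain ⟨l₂, hl₂⟩ := hlarge E B (fun p hp ↦ norm_pos_iff.1 (hpos (hB hp).1))
    ((Submodule.finrank_mono
      (Submodule.span_mono (Finset.coe_subset.2 (Finset.filter_subset _ _)))).trans hm)
    fun p hp q hq hpq hle hdir ↦
      hA.three_halves_mul_norm_le (hB hp).1 (hB hq).1 hpq (hpos (hB hp).1) (hB hp).2 hle hdir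
  refine ⟨Sum.elim l₁ l₂, fun p hp ↦ ?_⟩
  rcases le_or_gt ‖p‖ (2 * C) with hsmall_p | hlarge_p
  · obtain ⟨i, hi⟩ := hl₁ p (Submodule.subset_span hp) (hA.le_norm p hp) hsmall_p
    exact ⟨.inl i, hi⟩
  · obtain ⟨i, hi⟩ := hl₂ p (Finset.mem_filter.2 ⟨hp, hlarge_p⟩)
    exact ⟨.inr i, hi⟩

theorem exists_coloring (m : ℕ) (C : ℝ) {δ : ℝ} (hδ : 0 < δ) :
    ∃ (κ : Type) (_ : Finite κ), ∀ (E : Type u) [NormedAddCommGroup E] [NormedSpace ℝ E]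
      (A : Finset E), IsGapSet C δ (A : Set E) →
      finrank ℝ (Submodule.span ℝ (A : Set E)) ≤ m →
      ∃ χ : E → κ, ∀ a b a' b', χ a = χ b → χ a' = χ b' → (a - b) + (a' - b') ∉ A := by
  obtain ⟨ι, _, hι⟩ := exists_duals_quarter_le.{u} m C hδ
  obtain ⟨n, c, hc⟩ := exists_coloring_dist_le_of_compactSpace UnitAddCircle
    (ε := 1 / 10) (by norm_num)
  refine ⟨ι → Fin n, inferInstance, fun E _ _ A hA hm ↦ ?_⟩
  obtain ⟨l, hl⟩ := hι E A hA hm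
  refine ⟨fun a i ↦ c (l i a), fun a b a' b' hab hab' hmem ↦ ?_⟩
  obtain ⟨i, hi⟩ := hl _ hmem
  have hclose {x y : E} (hxy : c (l i x) = c (l i y)) :
      ‖(l i (x - y) : UnitAddCircle)‖ ≤ 1 / 10 := by
    rw [map_sub, AddCircle.coe_sub, ← dist_eq_norm]
    exact hc _ _ hxy
  rw [map_add, AddCircle.coe_add] at hi
  linarith [norm_add_le_of_le (hclose (congrFun hab i)) (hclose (congrFun hab' i))]

end IsGapSet

section SAbs

open NumberField IsDedekindDomain

variable {K : Type u} [Field K] [NumberField K]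

theorem prod_norm_embeddings_eq_abs_norm (x : K) :
    ∏ φ : K →+* ℂ, ‖φ x‖ = |(Algebra.norm ℚ x : ℝ)| := by
  classical
  rw [← Rat.cast_abs, ← InfinitePlace.prod_eq_abs_norm,
    ← Finset.prod_fiberwise Finset.univ InfinitePlace.mk]
  refine Finset.prod_congr rfl fun w _ ↦ ?_
  rw [← InfinitePlace.card_filter_mk_eq]
  exact Finset.prod_eq_pow_card fun φ hφ ↦ by
    rw [← InfinitePlace.apply, (Finset.mem_filter.1 hφ).2]

theorem finprod_adicAbv_eq_inv_abs_norm {x : K} (hx : x ≠ 0) :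
    ∏ᶠ v : HeightOneSpectrum (𝓞 K), HeightOneSpectrum.adicAbv K v x =
      |(Algebra.norm ℚ x : ℝ)|⁻¹ := by
  have h := FinitePlace.prod_eq_inv_abs_norm hx
  rw [← finprod_comp_equiv FinitePlace.equivHeightOneSpectrum.symm] at h
  simpa [FinitePlace.equivHeightOneSpectrum_symm_apply, FinitePlace.norm_embedding] using h

theorem hasFiniteMulSupport_adicAbv {x : K} (hx : x ≠ 0) :
    Function.HasFiniteMulSupport fun v : HeightOneSpectrum (𝓞 K) ↦
      HeightOneSpectrum.adicAbv K v x := by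
  have h := (FinitePlace.hasFiniteMulSupport hx).fun_comp_of_injective
    (FinitePlace.equivHeightOneSpectrum (K := K)).symm.injective
  simpa [FinitePlace.equivHeightOneSpectrum_symm_apply, FinitePlace.norm_embedding] using h

theorem adicAbv_le_one_iff (v : HeightOneSpectrum (𝓞 K)) (x : K) :
    HeightOneSpectrum.adicAbv K v x ≤ 1 ↔ v.valuation K x ≤ 1 := by
  rw [HeightOneSpectrum.adicAbv_def, ← NNReal.coe_one, NNReal.coe_le_coe,
    ← map_one (WithZeroMulInt.toNNReal (HeightOneSpectrum.absNorm_ne_zero v))]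
  exact (WithZeroMulInt.toNNReal_strictMono
    (HeightOneSpectrum.one_lt_absNorm_nnreal v)).le_iff_le

/-- The absolute values of `K` at the places in `S` and at infinity. The latter are indexed by the
complex embeddings, so that complex places are counted twice and no exponents occur in the product
formula. -/
noncomputable def sAbs (S : Set (HeightOneSpectrum (𝓞 K))) :
    (K →+* ℂ) ⊕ S → AbsoluteValue K ℝ :=
  Sum.elim place fun v ↦ HeightOneSpectrum.adicAbv K v.1

variable {S : Set (HeightOneSpectrum (𝓞 K))}

theorem coe_mem_integer_of_mem_unit {u : Kˣ} (hu : u ∈ S.unit K) :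
    (u : K) ∈ S.integer K :=
  fun _ hv ↦ (Set.unit_valuation_eq_one _ K ⟨u, hu⟩ hv).le

variable [Fintype S]

theorem one_le_prod_sAbs {x : K} (hx : x ∈ S.integer K) (hx₀ : x ≠ 0) :
    1 ≤ ∏ i, sAbs S i x := by
  classical
  let T := (hasFiniteMulSupport_adicAbv hx₀).toFinset
  have hle : ∏ᶠ v : HeightOneSpectrum (𝓞 K), HeightOneSpectrum.adicAbv K v x ≤
      ∏ v ∈ S.toFinset, HeightOneSpectrum.adicAbv K v x := by
    rw [finprod_eq_prod_of_mulSupport_subset (s := T ∪ S.toFinset) _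
        fun v hv ↦ Finset.mem_coe.2 (Finset.mem_union_left _ ((Set.Finite.mem_toFinset _).2 hv)),
      ← Finset.prod_sdiff Finset.subset_union_right]
    refine mul_le_of_le_one_left (Finset.prod_nonneg fun v _ ↦ apply_nonneg _ x)
      (Finset.prod_le_one (fun v _ ↦ apply_nonneg _ x) fun v hv ↦ ?_)
    exact (adicAbv_le_one_iff v x).2 (hx v fun hvS ↦
      (Finset.mem_sdiff.1 hv).2 (Set.mem_toFinset.2 hvS))
  rw [finprod_adicAbv_eq_inv_abs_norm hx₀] at hle
  have hnorm : (0 : ℝ) < |(Algebra.norm ℚ x : ℝ)| := by simpa using hx₀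
  calc (1 : ℝ) = |(Algebra.norm ℚ x : ℝ)| * |(Algebra.norm ℚ x : ℝ)|⁻¹ := by
        rw [mul_inv_cancel₀ hnorm.ne']
    _ ≤ |(Algebra.norm ℚ x : ℝ)| * ∏ v ∈ S.toFinset, HeightOneSpectrum.adicAbv K v x := by gcongr
    _ = ∏ i, sAbs S i x := by
        rw [Fintype.prod_sum_type, ← prod_norm_embeddings_eq_abs_norm, ← Finset.prod_set_coe S]
        rfl

theorem sum_log_sAbs_nonneg {x : K} (hx : x ∈ S.integer K) (hx₀ : x ≠ 0) :
    0 ≤ ∑ i, Real.log (sAbs S i x) := by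
  rw [← Real.log_prod fun i _ ↦ (sAbs S i).ne_zero hx₀]
  exact Real.log_nonneg (one_le_prod_sAbs hx hx₀)

theorem sum_log_sAbs_eq_zero {u : Kˣ} (hu : u ∈ S.unit K) :
    ∑ i, Real.log (sAbs S i u) = 0 := by
  have hinv := sum_log_sAbs_nonneg (coe_mem_integer_of_mem_unit (inv_mem hu)) u⁻¹.ne_zero
  simp only [Units.val_inv_eq_inv_val, map_inv₀, Real.log_inv, Finset.sum_neg_distrib] at hinv
  exact le_antisymm (neg_nonneg.1 hinv)
    (sum_log_sAbs_nonneg (coe_mem_integer_of_mem_unit hu) u.ne_zero)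

end SAbs

theorem norm_inv_sub_conj (z : ℂ) :
    ‖z⁻¹ - starRingEnd ℂ z‖ = |‖z‖⁻¹ - ‖z‖| := by
  rcases eq_or_ne z 0 with rfl | hz
  · simp
  have hfactor : z⁻¹ - starRingEnd ℂ z = z⁻¹ * ((1 - ‖z‖ ^ 2 : ℝ) : ℂ) := by
    rw [Complex.ofReal_sub, Complex.ofReal_one, Complex.ofReal_pow, ← Complex.mul_conj']
    field_simp
  rw [hfactor, norm_mul, norm_inv, Complex.norm_real, Real.norm_eq_abs, ← abs_of_pos (a := ‖z‖⁻¹)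
    (by positivity), ← abs_mul, abs_of_pos (a := ‖z‖⁻¹) (by positivity)]
  congr 1
  field_simp

theorem two_mul_sinh_le (y : ℝ) : 2 * Real.sinh y ≤ 2 * y * Real.exp y := by
  have h := mul_le_mul_of_nonneg_right (Real.one_sub_le_exp_neg (2 * y)) (Real.exp_pos y).le
  rw [← Real.exp_add, show -(2 * y) + y = -y by ring] at h
  rw [Real.sinh_eq]
  linarith

theorem abs_inv_sub_self_le {x : ℝ} (hx : 0 < x) :
    |x⁻¹ - x| ≤ 2 * |Real.log x| * Real.exp |Real.log x| := by
  refine le_of_eq_of_le ?_ (two_mul_sinh_le _)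
  rw [← Real.abs_sinh, Real.sinh_log hx, abs_div, abs_sub_comm, abs_two]
  ring

theorem inv_add_inv_sub_two_ne_zero {F : Type*} [Field F] [NeZero (2 : F)] {u v : F} (hu : u ≠ 0)
    (hv : v ≠ 0) (huv : u + v = 2) (hu₁ : u ≠ 1) : u⁻¹ + v⁻¹ - 2 ≠ 0 := by
  have hfactor : (u⁻¹ + v⁻¹ - 2) * (u * v) = 2 * (u - 1) ^ 2 := by
    calc (u⁻¹ + v⁻¹ - 2) * (u * v) = u + v - 2 * u * v := by field_simp; ring
      _ = 2 * (u - 1) ^ 2 := by linear_combination (1 - 2 * u) * huv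
  refine left_ne_zero_of_mul (b := u * v) ?_
  rw [hfactor]
  exact mul_ne_zero two_ne_zero (pow_ne_zero 2 (sub_ne_zero.2 hu₁))

/- The left side vanishes when `u` and `v` lie on the unit circle, since then inversion is
conjugation and `u + v` is real. -/
theorem norm_inv_add_inv_sub_two_le {u v : ℂ} (hu : u ≠ 0) (hv : v ≠ 0) (huv : u + v = 2) :
    ‖u⁻¹ + v⁻¹ - 2‖ ≤ Real.exp (3 * (|Real.log ‖u‖| + |Real.log ‖v‖|) - 1) := by
  have hconj : u⁻¹ + v⁻¹ - 2 = (u⁻¹ - starRingEnd ℂ u) + (v⁻¹ - starRingEnd ℂ v) := by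
    have : starRingEnd ℂ u + starRingEnd ℂ v = 2 := by
      rw [← map_add, huv, map_ofNat]
    linear_combination this
  set a := |Real.log ‖u‖|
  set b := |Real.log ‖v‖|
  have ha : 0 ≤ a := abs_nonneg _
  have hb : 0 ≤ b := abs_nonneg _
  calc ‖u⁻¹ + v⁻¹ - 2‖ ≤ 2 * a * Real.exp a + 2 * b * Real.exp b := by
        rw [hconj]
        refine norm_add_le_of_le ?_ ?_ <;> rw [norm_inv_sub_conj]
        · exact abs_inv_sub_self_le (norm_pos_iff.2 hu)
        · exact abs_inv_sub_self_le (norm_pos_iff.2 hv)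
    _ ≤ 2 * a * Real.exp (a + b) + 2 * b * Real.exp (a + b) := by
        gcongr <;> linarith
    _ = 2 * (a + b) * Real.exp (a + b) := by ring
    _ ≤ Real.exp (2 * (a + b) - 1) * Real.exp (a + b) := by
        gcongr
        linarith [Real.add_one_le_exp (2 * (a + b) - 1)]
    _ = Real.exp (3 * (a + b) - 1) := by rw [← Real.exp_add]; congr 1; ring

/- The local form of the gap principle: `a, b` and `a', b'` are the logarithmic sizes at one place
of the coordinates of two solutions of `u + v = 2`, and `m, d` those of `2` and of the difference of
the solutions. The term `a + b` disappears in the sum over all places. -/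
theorem gap_inequality {a a' b b' k m d t : ℝ} (ht : t ∈ Set.Icc (1 : ℝ) (3 / 2)) (hmk : m ≤ k)
    (hm : m ≤ k + max a b) (hda : d ≤ k + max a a') (hdb : d ≤ k + max b b') :
    d ≤ (2 * k - m) + (|a' - t * a| + |b' - t * b|) + 7 / 8 * (a + b) - 1 / 8 * (|a| + |b|) := by
  obtain ⟨ht₁, ht₂⟩ := ht
  have hmax {x x' : ℝ} : max x x' ≤ |x' - t * x| + x + max x 0 / 2 := by
    have hpos := le_max_right x 0
    have hx := le_max_left x 0
    have htx : t * x ≤ x + max x 0 / 2 := by nlinarith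
    refine max_le ?_ ?_
    · linarith [abs_nonneg (x' - t * x)]
    · linarith [le_abs_self (x' - t * x)]
  have hα := abs_nonneg (a' - t * a)
  have hβ := abs_nonneg (b' - t * b)
  have hda' := hda.trans (add_le_add_right (hmax (x := a) (x' := a')) k)
  have hdb' := hdb.trans (add_le_add_right (hmax (x := b) (x' := b')) k)
  rcases le_total 0 a with ha | ha <;> rcases le_total 0 b with hb | hb <;>
    rcases max_cases a b with ⟨h, -⟩ | ⟨h, -⟩ <;>
    simp only [max_eq_left, max_eq_right, abs_of_nonneg, abs_of_nonpos, ha, hb, h] at * <;>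
    linarith

section GapPrinciple

open NumberField IsDedekindDomain

variable {K : Type u} [Field K] {S : Set (HeightOneSpectrum (𝓞 K))}

/-- The constant `τ i` in the inequality `|x + y| ≤ τ i * max |x| |y|` at the place `i`: it is `2`
at infinity and `1` at the ultrametric places. -/
def triangleConst (S : Set (HeightOneSpectrum (𝓞 K))) : (K →+* ℂ) ⊕ S → ℝ :=
  Sum.elim (fun _ ↦ 2) fun _ ↦ 1

theorem triangleConst_pos (i : (K →+* ℂ) ⊕ S) : 0 < triangleConst S i := by
  rcases i with _ | _ <;> norm_num [triangleConst]

variable [NumberField K]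

theorem sum_log_triangleConst [Fintype S] :
    ∑ i, Real.log (triangleConst S i) = Fintype.card (K →+* ℂ) * Real.log 2 := by
  simp [triangleConst]

theorem sAbs_add_le (i : (K →+* ℂ) ⊕ S) (x y : K) :
    sAbs S i (x + y) ≤ triangleConst S i * max (sAbs S i x) (sAbs S i y) := by
  rcases i with φ | v
  · refine ((sAbs S (.inl φ)).add_le x y).trans ((add_le_add (le_max_left _ _)
      (le_max_right _ _)).trans_eq (two_mul _).symm)
  · exact (HeightOneSpectrum.adicAbv_add_le_max K v.1 x y).trans_eq (one_mul _).symm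

theorem sAbs_two_le (i : (K →+* ℂ) ⊕ S) : sAbs S i 2 ≤ triangleConst S i := by
  simpa [one_add_one_eq_two] using sAbs_add_le i 1 1

theorem log_sAbs_add_le (i : (K →+* ℂ) ⊕ S) {x y : K} (hx : x ≠ 0) (hy : y ≠ 0)
    (hxy : x + y ≠ 0) : Real.log (sAbs S i (x + y)) ≤
      Real.log (triangleConst S i) + max (Real.log (sAbs S i x)) (Real.log (sAbs S i y)) := by
  have hx' := (sAbs S i).pos hx
  have hy' := (sAbs S i).pos hy
  rw [← Real.strictMonoOn_log.monotoneOn.map_max hx' hy', ← Real.log_mul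
    (triangleConst_pos i).ne' (lt_max_of_lt_left hx').ne']
  exact Real.log_le_log ((sAbs S i).pos hxy) (sAbs_add_le i x y)

theorem log_sAbs_sub_le (i : (K →+* ℂ) ⊕ S) {x y : K} (hx : x ≠ 0) (hy : y ≠ 0)
    (hxy : x - y ≠ 0) : Real.log (sAbs S i (x - y)) ≤
      Real.log (triangleConst S i) + max (Real.log (sAbs S i x)) (Real.log (sAbs S i y)) := by
  rw [sub_eq_add_neg] at hxy ⊢
  simpa only [AbsoluteValue.map_neg] using log_sAbs_add_le i hx (neg_ne_zero.2 hy) hxy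

theorem inv_le_exp_abs_log {x : ℝ} (hx : 0 ≤ x) : x⁻¹ ≤ Real.exp |Real.log x| := by
  rcases hx.eq_or_lt with rfl | hx
  · simp
  · rw [← Real.exp_log (inv_pos.2 hx), Real.log_inv]
    exact Real.exp_le_exp.2 (neg_le_abs _)

theorem adicAbv_inv_add_inv_sub_two_le (v : HeightOneSpectrum (𝓞 K)) (x y : K) :
    HeightOneSpectrum.adicAbv K v (x⁻¹ + y⁻¹ - 2) ≤
      Real.exp (3 * (|Real.log (HeightOneSpectrum.adicAbv K v x)| +
        |Real.log (HeightOneSpectrum.adicAbv K v y)|)) := by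
  set f := HeightOneSpectrum.adicAbv K v
  have hx := abs_nonneg (Real.log (f x))
  have hy := abs_nonneg (Real.log (f y))
  calc f (x⁻¹ + y⁻¹ - 2) ≤ max (max (f x⁻¹) (f y⁻¹)) (f 2) := by
        rw [sub_eq_add_neg, ← f.map_neg 2]
        exact (HeightOneSpectrum.adicAbv_add_le_max K v _ _).trans
          (max_le_max_right _ (HeightOneSpectrum.adicAbv_add_le_max K v _ _))
    _ ≤ max (max (Real.exp |Real.log (f x)|) (Real.exp |Real.log (f y)|)) 1 := by
        rw [map_inv₀, map_inv₀]
        exact max_le_max (max_le_max (inv_le_exp_abs_log (apply_nonneg f x))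
          (inv_le_exp_abs_log (apply_nonneg f y)))
          (by exact_mod_cast HeightOneSpectrum.adicAbv_natCast_le_one K v 2)
    _ ≤ Real.exp (3 * (|Real.log (f x)| + |Real.log (f y)|)) := by
        refine max_le (max_le ?_ ?_) (Real.one_le_exp (by positivity)) <;>
          exact Real.exp_le_exp.2 (by linarith)

theorem log_sAbs_inv_add_inv_sub_two_le (i : (K →+* ℂ) ⊕ S) {u v : K} (hu : u ≠ 0) (hv : v ≠ 0)
    (huv : u + v = 2) (huv' : u⁻¹ + v⁻¹ - 2 ≠ 0) : Real.log (sAbs S i (u⁻¹ + v⁻¹ - 2)) ≤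
      3 * (|Real.log (sAbs S i u)| + |Real.log (sAbs S i v)|) -
        Sum.elim (fun _ ↦ 1) (fun _ ↦ 0) i := by
  rw [Real.log_le_iff_le_exp ((sAbs S i).pos huv')]
  rcases i with φ | w
  · simpa [sAbs, place_apply, map_ofNat φ 2] using norm_inv_add_inv_sub_two_le
      ((map_ne_zero φ).2 hu) ((map_ne_zero φ).2 hv) (by rw [← map_add, huv, map_ofNat])
  · simpa [sAbs] using adicAbv_inv_add_inv_sub_two_le w.1 u v

theorem log_sAbs_sub_le_of_add_eq_two (i : (K →+* ℂ) ⊕ S) {u v u' v' : Kˣ} {t : ℝ}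
    (huv : (u + v : K) = 2) (huv' : (u' + v' : K) = 2) (hne : (u - u' : K) ≠ 0)
    (ht : t ∈ Set.Icc (1 : ℝ) (3 / 2)) :
    Real.log (sAbs S i (u - u')) ≤ (2 * Real.log (triangleConst S i) - Real.log (sAbs S i 2)) +
      (|Real.log (sAbs S i u') - t * Real.log (sAbs S i u)| +
        |Real.log (sAbs S i v') - t * Real.log (sAbs S i v)|) +
      7 / 8 * (Real.log (sAbs S i u) + Real.log (sAbs S i v)) -
      1 / 8 * (|Real.log (sAbs S i u)| + |Real.log (sAbs S i v)|) := by
  have hsub : (u - u' : K) = v' - v := by linear_combination huv - huv'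
  refine gap_inequality ht (Real.log_le_log ((sAbs S i).pos two_ne_zero) (sAbs_two_le i))
    (huv ▸ log_sAbs_add_le i u.ne_zero v.ne_zero (huv ▸ two_ne_zero))
    (log_sAbs_sub_le i u.ne_zero u'.ne_zero hne) ?_
  rw [max_comm, hsub]
  exact log_sAbs_sub_le i v'.ne_zero v.ne_zero (hsub ▸ hne)

variable [Fintype S]

variable (S) in
/-- The logarithmic embedding of pairs of `S`-units. The factor `[K : ℚ]⁻¹` makes the gap principle
hold with constants independent of `K`. -/
noncomputable def logPair :
    Additive (Kˣ × Kˣ) →+ PiLp 1 fun _ : ((K →+* ℂ) ⊕ S) ⊕ ((K →+* ℂ) ⊕ S) ↦ ℝ :=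
  AddMonoidHom.mk' (fun w ↦ WithLp.toLp 1 <| (Fintype.card (K →+* ℂ) : ℝ)⁻¹ •
    Sum.elim (fun i ↦ Real.log (sAbs S i w.toMul.1)) fun i ↦ Real.log (sAbs S i w.toMul.2))
  fun w w' ↦ by
    ext (i | i) <;> simp [Real.log_mul, mul_add]

theorem norm_logPair (w : Kˣ × Kˣ) : ‖logPair S (.ofMul w)‖ = (Fintype.card (K →+* ℂ) : ℝ)⁻¹ *
    ∑ i, (|Real.log (sAbs S i w.1)| + |Real.log (sAbs S i w.2)|) := by
  simp [logPair, PiLp.norm_eq_of_L1, Finset.mul_sum, mul_add, Finset.sum_add_distrib]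

theorem norm_logPair_sub_smul (w w' : Kˣ × Kˣ) (t : ℝ) :
    ‖logPair S (.ofMul w') - t • logPair S (.ofMul w)‖ = (Fintype.card (K →+* ℂ) : ℝ)⁻¹ *
      ∑ i, (|Real.log (sAbs S i w'.1) - t * Real.log (sAbs S i w.1)| +
        |Real.log (sAbs S i w'.2) - t * Real.log (sAbs S i w.2)|) := by
  have hscale (d x x' : ℝ) (hd : 0 ≤ d) : |d * x' - t * (d * x)| = d * |x' - t * x| := by
    rw [mul_left_comm, ← mul_sub, abs_mul, abs_of_nonneg hd]
  simp [logPair, PiLp.norm_eq_of_L1, hscale, Finset.mul_sum, mul_add, Finset.sum_add_distrib]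

variable (S) in
/-- The solutions of the unit equation `u + v = 2` in `S`-units other than `(1, 1)`. -/
def unitEquationSolutions : Set (Kˣ × Kˣ) :=
  {w | w.1 ∈ S.unit K ∧ w.2 ∈ S.unit K ∧ (w.1 + w.2 : K) = 2 ∧ w.1 ≠ 1}

theorem third_le_norm_logPair {w : Kˣ × Kˣ} (hw : w ∈ unitEquationSolutions S) :
    1 / 3 ≤ ‖logPair S (.ofMul w)‖ := by
  obtain ⟨u, v⟩ := w
  obtain ⟨hu, hv, huv, hu₁⟩ := hw
  dsimp only at hu hv huv hu₁
  set g : K := (u : K)⁻¹ + (v : K)⁻¹ - 2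
  have hg₀ : g ≠ 0 :=
    inv_add_inv_sub_two_ne_zero u.ne_zero v.ne_zero huv (mt Units.val_eq_one.1 hu₁)
  have hgS : g ∈ S.integer K := by
    have hinv := add_mem (coe_mem_integer_of_mem_unit (inv_mem hu))
      (coe_mem_integer_of_mem_unit (inv_mem hv))
    rw [Units.val_inv_eq_inv_val, Units.val_inv_eq_inv_val] at hinv
    exact sub_mem hinv (ofNat_mem _ 2)
  have hsum := (sum_log_sAbs_nonneg hgS hg₀).trans <| Finset.sum_le_sum fun i _ ↦
    log_sAbs_inv_add_inv_sub_two_le i u.ne_zero v.ne_zero huv hg₀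
  have hinfinite : ∑ i : (K →+* ℂ) ⊕ S, Sum.elim (fun _ ↦ (1 : ℝ)) (fun _ ↦ 0) i =
      Fintype.card (K →+* ℂ) := by simp
  rw [Finset.sum_sub_distrib, ← Finset.mul_sum, hinfinite] at hsum
  rw [norm_logPair, inv_mul_eq_div, le_div_iff₀ (by exact_mod_cast Fintype.card_pos)]
  linarith

theorem norm_logPair_le {w w' : Kˣ × Kˣ} (hw : w ∈ unitEquationSolutions S)
    (hw' : w' ∈ unitEquationSolutions S) (hne : w ≠ w') {t : ℝ}
    (ht : t ∈ Set.Icc (1 : ℝ) (3 / 2)) :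
    ‖logPair S (.ofMul w)‖ ≤
      16 * Real.log 2 + 8 * ‖logPair S (.ofMul w') - t • logPair S (.ofMul w)‖ := by
  obtain ⟨u, v⟩ := w
  obtain ⟨u', v'⟩ := w'
  obtain ⟨hu, hv, huv, -⟩ := hw
  obtain ⟨hu', hv', huv', -⟩ := hw'
  dsimp only at hu hv huv hu' hv' huv'
  have hδ₀ : (u - u' : K) ≠ 0 := fun h ↦ hne <| Prod.ext (Units.ext (sub_eq_zero.1 h))
    (Units.ext (by linear_combination huv - huv' - h))
  have hδS : (u - u' : K) ∈ S.integer K :=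
    sub_mem (coe_mem_integer_of_mem_unit hu) (coe_mem_integer_of_mem_unit hu')
  have hsum := (sum_log_sAbs_nonneg hδS hδ₀).trans <| Finset.sum_le_sum fun i _ ↦
    log_sAbs_sub_le_of_add_eq_two i huv huv' hδ₀ ht
  have htwo : 0 ≤ ∑ i, Real.log (sAbs S i 2) :=
    sum_log_sAbs_nonneg (ofNat_mem _ 2) two_ne_zero
  simp only [Finset.sum_sub_distrib, Finset.sum_add_distrib, ← Finset.mul_sum,
    sum_log_triangleConst, sum_log_sAbs_eq_zero hu, sum_log_sAbs_eq_zero hv] at hsum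
  have hd : (0 : ℝ) < Fintype.card (K →+* ℂ) := by exact_mod_cast Fintype.card_pos
  rw [norm_logPair, norm_logPair_sub_smul, ← mul_le_mul_iff_right₀ hd]
  simp only [mul_add, mul_left_comm _ (8 : ℝ), mul_inv_cancel_left₀ hd.ne',
    Finset.sum_add_distrib]
  linarith

variable (S) in
theorem isGapSet_logPair_image : IsGapSet (16 * Real.log 2) (1 / 3)
    ((fun w ↦ logPair S (.ofMul w)) '' unitEquationSolutions S) where
  le_norm := by
    rintro _ ⟨w, hw, rfl⟩
    exact third_le_norm_logPair hw
  norm_le := by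
    rintro _ ⟨w, hw, rfl⟩ _ ⟨w', hw', rfl⟩ hne t ht
    exact norm_logPair_le hw hw' (fun h ↦ hne (h ▸ rfl)) ht

theorem exists_coloring_unitEquationSolutions (m : ℕ) :
    ∃ (κ : Type) (_ : Finite κ), ∀ (K : Type u) [Field K] [NumberField K]
      (S : Set (HeightOneSpectrum (𝓞 K))) [Fintype S] (U : Finset (Kˣ × Kˣ)),
      (U : Set (Kˣ × Kˣ)) ⊆ unitEquationSolutions S →
      finrank ℝ (Submodule.span ℝ ((fun w ↦ logPair S (.ofMul w)) '' (U : Set (Kˣ × Kˣ)))) ≤ m →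
      ∃ c : Kˣ → κ, ∀ x y z, c x = c y → c y = c z → (x / y, z / y) ∉ U := by
  classical
  obtain ⟨κ, _, hκ⟩ := IsGapSet.exists_coloring.{u} m (16 * Real.log 2) (δ := 1 / 3) (by norm_num)
  refine ⟨κ × κ, inferInstance, fun K _ _ S _ U hU hm ↦ ?_⟩
  rw [← Finset.coe_image] at hm
  obtain ⟨χ, hχ⟩ := hκ _ (U.image fun w ↦ logPair S (.ofMul w)) ((isGapSet_logPair_image S).mono
    (by rw [Finset.coe_image]; exact Set.image_mono hU)) hm
  refine ⟨fun y ↦ (χ (logPair S (.ofMul (y, 1))), χ (logPair S (.ofMul (1, y)))),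
    fun x y z hxy hyz hmem ↦ ?_⟩
  refine hχ _ _ _ _ (congrArg Prod.fst hxy) (congrArg Prod.snd hyz).symm ?_
  rw [← map_sub (logPair S), ← map_sub (logPair S), ← map_add (logPair S)]
  simpa [← ofMul_div, ← ofMul_mul] using Finset.mem_image_of_mem (fun w ↦ logPair S (.ofMul w)) hmem

end GapPrinciple

theorem finrank_span_range_le_rank {R G V : Type*} [Ring R] [StrongRankCondition R] [AddGroup G]
    [AddGroup.FG G] [AddCommGroup V] [Module R V] (f : G →+ V) :
    finrank R (Submodule.span R (Set.range f)) ≤ AddGroup.rank G := by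
  classical
  obtain ⟨T, hcard, hT⟩ := AddGroup.rank_spec G
  have hspan : Submodule.span R (Set.range f) = Submodule.span R (T.image f : Set V) := by
    refine le_antisymm (Submodule.span_le.2 ?_) (Submodule.span_mono (by simp))
    have hrange : f.range = AddSubgroup.closure (T.image f : Set V) := by
      rw [Finset.coe_image, ← AddMonoidHom.map_closure, hT, ← AddMonoidHom.range_eq_map]
    rw [← AddMonoidHom.coe_range, hrange]
    exact (AddSubgroup.closure_le (Submodule.span R _).toAddSubgroup).2
      Submodule.subset_span
  rw [hspan, ← hcard]
  exact (finrank_span_finset_le_card _).trans Finset.card_image_le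

theorem exists_finite_forall_mem_unit {R K : Type*} [CommRing R] [IsDedekindDomain R] [Field K]
    [Algebra R K] [IsFractionRing R K] (s : Finset Kˣ) :
    ∃ S : Set (IsDedekindDomain.HeightOneSpectrum R), S.Finite ∧ ∀ u ∈ s, u ∈ S.unit K := by
  refine ⟨⋃ u ∈ s, {v | v.valuation K (u : K) ≠ 1}, s.finite_toSet.biUnion fun u _ ↦ ?_,
    fun u hu v hv ↦ by_contra fun h ↦ hv (Set.mem_biUnion hu h)⟩
  refine ((IsDedekindDomain.HeightOneSpectrum.Support.finite R (u : K)).union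
    (IsDedekindDomain.HeightOneSpectrum.Support.finite R (u : K)⁻¹)).subset fun v hv ↦ ?_
  rcases lt_or_gt_of_ne hv with h | h
  · exact .inr (by
      simpa [IsDedekindDomain.HeightOneSpectrum.Support] using
        (one_lt_inv₀ (zero_lt_iff.2 (by simp))).2 h)
  · exact .inl h

theorem exists_ringHom_numberField_ne_zero {A : Type u} [CommRing A] [IsReduced A] [Algebra ℚ A]
    [Algebra.FiniteType ℚ A] {f : A} (hf : f ≠ 0) :
    ∃ (K : Type u) (_ : Field K) (_ : NumberField K) (φ : A →+* K), φ f ≠ 0 := by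
  have hJacobson : IsJacobsonRing A := isJacobsonRing_of_finiteType (A := ℚ)
  have hbot : (⊥ : Ideal A).jacobson = ⊥ :=
    hJacobson.out (fun x ⟨n, hn⟩ ↦ IsReduced.eq_zero x ⟨n, Ideal.mem_bot.1 hn⟩)
  obtain ⟨M, hM, hfM⟩ : ∃ M : Ideal A, M.IsMaximal ∧ f ∉ M := by
    by_contra! h
    have hmem : f ∈ (⊥ : Ideal A).jacobson := Submodule.mem_sInf.2 fun M hM ↦ h M hM.2
    rw [hbot] at hmem
    exact hf hmem
  let := Ideal.Quotient.field M
  have hfinite : Module.Finite ℚ (A ⧸ M) := finite_of_finite_type_of_isJacobsonRing ℚ (A ⧸ M)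
  have hchar : CharZero (A ⧸ M) := algebraRat.charZero _
  have hnumberField : NumberField (A ⧸ M) :=
    { to_charZero := hchar
      to_finiteDimensional := by
        convert hfinite
        exact Subsingleton.elim _ _ }
  exact ⟨A ⧸ M, _, hnumberField, Ideal.Quotient.mk M, mt Ideal.Quotient.eq_zero_iff_mem.1 hfM⟩

theorem exists_monoidHom_units_numberField {Γ : Type*} {F : Type u} [CommGroup Γ] [Group.FG Γ]
    [Field F] [CharZero F] (ψ : Γ →* F) (s : Finset Γ) :
    ∃ (K : Type u) (_ : Field K) (_ : NumberField K) (φ : Γ →* Kˣ),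
      (∀ x ∈ s, ∀ y ∈ s, φ x = φ y → ψ x = ψ y) ∧
      ∀ x y z, ψ x + ψ z = 2 * ψ y → (φ x + φ z : K) = 2 * φ y := by
  classical
  let Ψ := (MonoidAlgebra.lift ℚ F Γ ψ).rangeRestrict
  have hfiniteType : Algebra.FiniteType ℚ (MonoidAlgebra.lift ℚ F Γ ψ).range :=
    .of_surjective Ψ (AlgHom.rangeRestrict_surjective _)
  let j : Γ →* (MonoidAlgebra.lift ℚ F Γ ψ).range := (Ψ : _ →* _).comp (MonoidAlgebra.of ℚ Γ)
  have hj (x : Γ) : (j x : F) = ψ x := by simp [j, Ψ]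
  have hf : ∏ p ∈ s ×ˢ s with ψ p.1 ≠ ψ p.2, (j p.1 - j p.2) ≠ 0 :=
    Finset.prod_ne_zero_iff.2 fun p hp h ↦ (Finset.mem_filter.1 hp).2 <| by
      rw [← hj, ← hj, sub_eq_zero.1 h]
  obtain ⟨K, _, _, ρ, hρ⟩ := exists_ringHom_numberField_ne_zero hf
  refine ⟨K, _, ‹_›, ((ρ : _ →* K).comp j).toHomUnits, fun x hx y hy hxy ↦ ?_, fun x y z h ↦ ?_⟩
  · by_contra hne
    rw [map_prod] at hρ
    refine Finset.prod_ne_zero_iff.1 hρ (x, y) (by simp [hx, hy, hne]) ?_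
    rw [map_sub, sub_eq_zero]
    exact congrArg Units.val hxy
  · have hjxyz : j x + j z = 2 * j y := Subtype.ext <| by
      rw [Subalgebra.coe_add, Subalgebra.coe_mul, hj, hj, hj]
      exact h
    have := congrArg ρ hjxyz
    rwa [map_add, map_mul, map_ofNat] at this

theorem exists_coloring_of_numberField (Γ : Type*) [CommGroup Γ] [Group.FG Γ] :
    ∃ (κ : Type) (_ : Finite κ), ∀ (K : Type u) [Field K] [NumberField K] (φ : Γ →* Kˣ)
      (s : Finset Γ), ∃ c : Γ → κ, ∀ x ∈ s, ∀ y ∈ s, ∀ z ∈ s, c x = c y → c y = c z →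
        (φ x + φ z : K) = 2 * φ y → φ x = φ y := by
  classical
  obtain ⟨κ, _, hκ⟩ :=
    exists_coloring_unitEquationSolutions.{u} (AddGroup.rank (Additive (Γ × Γ)))
  refine ⟨κ, inferInstance, fun K _ _ φ s ↦ ?_⟩
  obtain ⟨S, hS, hunit⟩ := exists_finite_forall_mem_unit (R := NumberField.RingOfIntegers K)
    (s.image φ)
  have : Fintype S := hS.fintype
  let U : Finset (Kˣ × Kˣ) := {w ∈ (s ×ˢ s ×ˢ s).image fun t ↦
    (φ t.1 / φ t.2.1, φ t.2.2 / φ t.2.1) | w ∈ unitEquationSolutions S}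
  have hrank : finrank ℝ (Submodule.span ℝ ((fun w ↦ logPair S (.ofMul w)) '' (U : Set _))) ≤
      AddGroup.rank (Additive (Γ × Γ)) := by
    let L := (logPair S).comp (φ.prodMap φ).toAdditive
    have : FiniteDimensional ℝ (Submodule.span ℝ (Set.range L)) := inferInstance
    refine (Submodule.finrank_mono (Submodule.span_mono ?_)).trans (finrank_span_range_le_rank L)
    rintro _ ⟨w, hw, rfl⟩
    obtain ⟨t, -, rfl⟩ := Finset.mem_image.1 (Finset.mem_filter.1 hw).1
    exact ⟨.ofMul (t.1 / t.2.1, t.2.2 / t.2.1), by simp [L]⟩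
  obtain ⟨c, hc⟩ := hκ K S U (fun w hw ↦ (Finset.mem_filter.1 hw).2) hrank
  refine ⟨fun x ↦ c (φ x), fun x hx y hy z hz hxy hyz hap ↦ by_contra fun hne ↦ ?_⟩
  have hdiv {a b} (ha : a ∈ s) (hb : b ∈ s) : φ a / φ b ∈ S.unit K :=
    div_mem (hunit _ (Finset.mem_image_of_mem φ ha)) (hunit _ (Finset.mem_image_of_mem φ hb))
  refine hc _ _ _ hxy hyz (Finset.mem_filter.2 ⟨Finset.mem_image.2 ⟨(x, y, z), by simp [hx, hy, hz],
    rfl⟩, hdiv hx hy, hdiv hz hy, ?_, mt div_eq_one.1 hne⟩)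
  rw [Units.val_div_eq_div_val, Units.val_div_eq_div_val, ← add_div, hap,
    mul_div_cancel_right₀ _ (φ y).ne_zero]

theorem exists_coloring_monoidHom {Γ F : Type*} [CommGroup Γ] [Group.FG Γ] [Field F] [CharZero F]
    (ψ : Γ →* F) : ∃ (κ : Type) (_ : Finite κ) (c : Γ → κ), ∀ x y z,
      c x = c y → c y = c z → ψ x + ψ z = 2 * ψ y → ψ x = ψ y := by
  classical
  obtain ⟨κ, _, hκ⟩ := exists_coloring_of_numberField Γ
  have hfinite (s : Finset Γ) : ∃ c : Γ → κ, ∀ x ∈ s, ∀ y ∈ s, ∀ z ∈ s,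
      c x = c y → c y = c z → ψ x + ψ z = 2 * ψ y → ψ x = ψ y := by
    obtain ⟨K, _, _, φ, hinj, hadd⟩ := exists_monoidHom_units_numberField ψ s
    obtain ⟨c, hc⟩ := hκ K φ s
    exact ⟨c, fun x hx y hy z hz hxy hyz h ↦
      hinj x hx y hy (hc x hx y hy z hz hxy hyz (hadd x y z h))⟩
  choose g hg using hfinite
  obtain ⟨c, hc⟩ := Finset.rado_selection (β := fun _ : Γ ↦ κ) g
  refine ⟨κ, inferInstance, c, fun x y z hxy hyz h ↦ ?_⟩
  obtain ⟨t, hst, ht⟩ := hc {x, y, z}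
  rw [ht x (by simp), ht y (by simp)] at hxy
  rw [ht y (by simp), ht z (by simp)] at hyz
  exact hg t x (hst (by simp)) y (hst (by simp)) z (hst (by simp)) hxy hyz h

theorem stmt_10_general {F : Type*} [Field F] [CharZero F] (Γ : Subgroup Fˣ) (hΓ : Γ.FG) :
    ∃ (r : ℕ) (c : Γ → Fin r), ∀ x y z : Γ,
      c x = c y → c y = c z →
      ((x : Fˣ) : F) + ((z : Fˣ) : F) = 2 * ((y : Fˣ) : F) →
      x = y ∧ y = z := by
  have : Group.FG Γ := (Group.fg_iff_subgroup_fg Γ).2 hΓ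
  obtain ⟨κ, _, c, hc⟩ := exists_coloring_monoidHom ((Units.coeHom F).comp Γ.subtype)
  let e := Finite.equivFin κ
  refine ⟨_, e ∘ c, fun x y z hxy hyz hap ↦ ?_⟩
  have hxy' : ((x : Fˣ) : F) = (y : Fˣ) := hc x y z (e.injective hxy) (e.injective hyz) hap
  have hyz' : ((y : Fˣ) : F) = (z : Fˣ) := by linear_combination hxy' - hap
  exact ⟨Subtype.ext (Units.ext hxy'), Subtype.ext (Units.ext hyz')⟩

/-- A finitely generated multiplicative subgroup `Γ` of `ℂˣ` admits a finite coloring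
with no nonconstant monochromatic 3-term arithmetic progression: every monochromatic
triple `x, y, z ∈ Γ` with `x + z = 2y` (in `ℂ`) satisfies `x = y = z`. -/
theorem stmt_10 (Γ : Subgroup ℂˣ) (hΓ : Γ.FG) :
    ∃ (r : ℕ) (c : Γ → Fin r), ∀ x y z : Γ,
      c x = c y → c y = c z →
      ((x : ℂˣ) : ℂ) + ((z : ℂˣ) : ℂ) = 2 * ((y : ℂˣ) : ℂ) →
      x = y ∧ y = z :=
  stmt_10_general Γ hΓ
end

section
/- Let Γ be a finitely generated subgroup of the multiplicative group ℂˣ of nonzero complex numbers. Then there exist r ∈ ℕ and a coloring c : Γ → {1,…,r} such that there is no c-monochromatic triple x, y, z ∈ Γ with x + y = z (in ℂ). In other words, Schur's equation x + y = z is not partition regular over Γ. -/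
/-!
`Γ` lies in the unit group of a subring `A` of `ℂ` that is finitely generated over `ℤ`. By Zariski's
lemma over the Jacobson ring `ℤ`, every residue field `A ⧸ M` is finite, and an element of `Γ` is
coloured by its residue. If `x`, `y`, `z` had the same residue `a` and `x + y = z`, then
`a + a = a`, so `a = 0`, whereas units have nonzero residues.
-/

section ResidueFields

theorem isJacobsonRing_of_jacobson_bot {R : Type*} [CommRing R] [Ring.DimensionLEOne R]
    (h : (⊥ : Ideal R).jacobson = ⊥) : IsJacobsonRing R := by
  refine isJacobsonRing_iff_prime_eq.mpr fun P hP => ?_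
  obtain rfl | hP_ne_bot := eq_or_ne P ⊥
  · exact h
  · have := hP.isMaximal hP_ne_bot
    exact Ideal.jacobson_eq_self_of_isMaximal

theorem int_jacobson_bot : (⊥ : Ideal ℤ).jacobson = ⊥ := by
  refine eq_bot_iff.mpr fun n hn => Ideal.mem_bot.mpr (mul_self_eq_zero.mp ?_)
  have isUnit_mul_self_add_one : IsUnit (n * n + 1) := Ideal.mem_jacobson_bot.mp hn n
  rcases Int.isUnit_iff.mp isUnit_mul_self_add_one with h | h <;> linarith [mul_self_nonneg n]

instance : IsJacobsonRing ℤ :=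
  isJacobsonRing_of_jacobson_bot int_jacobson_bot

variable (R : Type*) [CommRing R] [Ring.HasFiniteQuotients R]

theorem finite_of_moduleFinite_of_not_isField (hR : ¬IsField R) (K : Type*) [Field K]
    [Algebra R K] [Module.Finite R K] : Finite K := by
  have not_injective : ¬Function.Injective (algebraMap R K) := fun h =>
    hR (isField_of_isIntegral_of_isField h (Field.toIsField K))
  have ker_ne_bot : (⊥ : Ideal K).under R ≠ ⊥ :=
    mt (RingHom.injective_iff_ker_eq_bot _).mpr not_injective
  have := Ring.HasFiniteQuotients.finiteQuotient ker_ne_bot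
  have : Module.Finite (R ⧸ (⊥ : Ideal K).under R) (K ⧸ (⊥ : Ideal K)) :=
    Module.Finite.of_restrictScalars_finite R _ _
  have : Finite (K ⧸ (⊥ : Ideal K)) := Module.finite_of_finite (R ⧸ (⊥ : Ideal K).under R)
  exact Finite.of_equiv _ (RingEquiv.quotientBot K).toEquiv

theorem finite_quotient_of_isMaximal_of_finiteType [IsJacobsonRing R] (hR : ¬IsField R)
    {A : Type*} [CommRing A] [Algebra R A] [Algebra.FiniteType R A] (M : Ideal A) [M.IsMaximal] :
    Finite (A ⧸ M) := by
  let _ : Field (A ⧸ M) := Ideal.Quotient.field M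
  have : Module.Finite R (A ⧸ M) := finite_of_finite_type_of_isJacobsonRing R (A ⧸ M)
  exact finite_of_moduleFinite_of_not_isField R hR (A ⧸ M)

end ResidueFields

theorem exists_fg_subalgebra_le_range_unitsMap (k : Type*) {R : Type*} [CommSemiring k]
    [Semiring R] [Algebra k R] {Γ : Subgroup Rˣ} (hΓ : Γ.FG) :
    ∃ A : Subalgebra k R, A.FG ∧ Γ ≤ (Units.map (A.val : A →* R)).range := by
  classical
  obtain ⟨S, rfl⟩ := hΓ
  let T : Finset R := S.image (fun u : Rˣ => (u : R)) ∪ S.image (fun u : Rˣ => ((u⁻¹ : Rˣ) : R))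
  refine ⟨Algebra.adjoin k T, Subalgebra.fg_adjoin_finset T, (Subgroup.closure_le _).mpr ?_⟩
  intro u hu
  have mem : (u : R) ∈ Algebra.adjoin k (T : Set R) :=
    Algebra.subset_adjoin (Finset.mem_union_left _ (Finset.mem_image_of_mem _ hu))
  have inv_mem : ((u⁻¹ : Rˣ) : R) ∈ Algebra.adjoin k (T : Set R) :=
    Algebra.subset_adjoin (Finset.mem_union_right _ (Finset.mem_image_of_mem _ hu))
  exact ⟨⟨⟨u, mem⟩, ⟨_, inv_mem⟩, Subtype.ext u.mul_inv, Subtype.ext u.inv_mul⟩, Units.ext rfl⟩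

theorem units_add_ne_of_map_eq {A B : Type*} [Semiring A] [Ring B] [Nontrivial B] (f : A →+* B)
    {u v w : Aˣ} (huv : f u = f v) (hvw : f v = f w) : (u + v : A) ≠ w := by
  intro h
  have double_eq_self : f w + f w = f w := by
    simpa only [map_add, huv, hvw] using congrArg f h
  exact (w.isUnit.map f).ne_zero (add_eq_left.mp double_eq_self)

theorem stmt_11_general {R : Type*} [CommRing R] [Nontrivial R] (Γ : Subgroup Rˣ) (hΓ : Γ.FG) :
    ∃ (r : ℕ) (c : Γ → Fin r), ¬∃ x y z : Γ,
      c x = c y ∧ c y = c z ∧ ((x : Rˣ) : R) + ((y : Rˣ) : R) = ((z : Rˣ) : R) := by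
  obtain ⟨A, hA, hΓA⟩ := exists_fg_subalgebra_le_range_unitsMap ℤ hΓ
  have : Algebra.FiniteType ℤ A := A.fg_iff_finiteType.mp hA
  obtain ⟨M, _⟩ := Ideal.exists_maximal A
  have : Finite (A ⧸ M) := finite_quotient_of_isMaximal_of_finiteType ℤ Int.not_isField M
  obtain ⟨r, ⟨e⟩⟩ := Finite.exists_equiv_fin (A ⧸ M)
  choose unitLift unitLift_spec using fun x : Γ => hΓA x.2
  have val_unitLift (x : Γ) : ((unitLift x : A) : R) = (x : Rˣ) :=
    congrArg Units.val (unitLift_spec x)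
  refine ⟨r, fun x => e (Ideal.Quotient.mk M (unitLift x)), ?_⟩
  rintro ⟨x, y, z, hxy, hyz, h⟩
  refine units_add_ne_of_map_eq (Ideal.Quotient.mk M) (e.injective hxy) (e.injective hyz) ?_
  exact Subtype.ext (by simpa only [Subalgebra.coe_add, val_unitLift] using h)

/-- Schur's equation `x + y = z` is not partition regular over any finitely generated
multiplicative subgroup `Γ` of `ℂˣ`: there is a finite coloring of `Γ` with no
monochromatic triple `x, y, z` satisfying `x + y = z` in `ℂ`. -/
theorem stmt_11 (Γ : Subgroup ℂˣ) (hΓ : Γ.FG) :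
    ∃ (r : ℕ) (c : Γ → Fin r), ¬∃ x y z : Γ,
      c x = c y ∧ c y = c z ∧
      ((x : ℂˣ) : ℂ) + ((y : ℂˣ) : ℂ) = ((z : ℂˣ) : ℂ) :=
  stmt_11_general Γ hΓ
end

section
/- The polynomial exponential equation (x·y − z + 2)·2^x·3^y + (x − y + 2z + 2)·5^x·7^y + (x·y − z + 3)·11^x·13^y = 0, with unknowns x, y, z ∈ ℤ and the left-hand side evaluated in ℚ, is not partition regular over ℤ: there exist r ∈ ℕ and a coloring c : ℤ → {1,…,r} such that no x, y, z ∈ ℤ with c(x) = c(y) = c(z) satisfy the equation. -/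
/-!
Color an integer by its sign and its residues modulo `2` and `3`. If `x`, `y`, `z` share a color,
the factor `x y - z + 3` is odd and `x - y + 2 z + 2` is even, while `x y - z + 2` is prime to `3`.
For `x > 0` the third term is therefore the only one that is a `2`-adic unit, and for
`y < 0` the factor `3 ^ y` makes the first term the only one that is not `3`-integral.
In both cases one term strictly dominates the other two at some prime, so the sum cannot vanish.
The remaining color class is `{0}`, and `(0, 0, 0)` is not a solution.
-/

section Valuation

variable {Γ₀ : Type*} [LinearOrderedCommGroupWithZero Γ₀]

theorem add_add_ne_zero_of_valuation_lt {R : Type*} [Ring R] (v : Valuation R Γ₀) {r s t : R}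
    (hr : v r < v t) (hs : v s < v t) : r + s + t ≠ 0 := fun h ↦
  (v.map_add_lt hr hs).ne <| by rw [eq_neg_of_add_eq_zero_left h, v.map_neg]

variable {K : Type*} [DivisionRing K] (v : Valuation K Γ₀) {c a b : K} {m n : ℤ}

theorem valuation_mul_zpow_mul_zpow_of_eq_one (ha : v a = 1) (hb : v b = 1) :
    v (c * a ^ m * b ^ n) = v c := by
  simp only [map_mul, map_zpow₀, ha, hb, one_zpow, mul_one]

theorem valuation_mul_zpow_mul_zpow_lt_one (hc : v c ≤ 1) (ha : v a < 1) (hb : v b = 1)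
    (hm : 0 < m) : v (c * a ^ m * b ^ n) < 1 := by
  lift m to ℕ using hm.le
  simp only [zpow_natCast, map_mul, map_pow, map_zpow₀, hb, one_zpow, mul_one]
  have hm₀ : m ≠ 0 := by lia
  exact mul_lt_one_of_nonneg_of_lt_one_right hc zero_le (pow_lt_one₀ zero_le ha hm₀)

theorem one_lt_valuation_mul_zpow_mul_zpow (hc : 1 ≤ v c) (ha : v a = 1) (hb₀ : b ≠ 0)
    (hb : v b < 1) (hn : n < 0) : 1 < v (c * a ^ m * b ^ n) := by
  simp only [map_mul, map_zpow₀, ha, one_zpow, mul_one]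
  exact (one_lt_zpow_of_neg₀ (v.pos_iff.2 hb₀) hb hn).trans_le (le_mul_of_one_le_left' hc)

end Valuation

section PadicValuation

variable {p : ℕ} [Fact p.Prime]

theorem padicValuation_intCast_le_one (k : ℤ) : Rat.padicValuation p k ≤ 1 := by
  rw [Rat.padicValuation_cast]
  exact Int.padicValuation_le_one p k

theorem padicValuation_intCast_eq_one_iff {k : ℤ} :
    Rat.padicValuation p k = 1 ↔ (k : ZMod p) ≠ 0 := by
  rw [Rat.padicValuation_cast, Int.padicValuation_eq_one_iff, Ne, ZMod.intCast_zmod_eq_zero_iff_dvd]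

theorem padicValuation_intCast_lt_one_iff {k : ℤ} :
    Rat.padicValuation p k < 1 ↔ (k : ZMod p) = 0 := by
  rw [Rat.padicValuation_cast, Int.padicValuation_lt_one_iff, ZMod.intCast_zmod_eq_zero_iff_dvd]

theorem padicValuation_ofNat_eq_one {k : ℕ} [k.AtLeastTwo] (hk : ¬p ∣ k) :
    Rat.padicValuation p (OfNat.ofNat k : ℚ) = 1 := by
  have hk' : ((k : ℤ) : ZMod p) ≠ 0 := by
    rwa [Int.cast_natCast, Ne, ZMod.natCast_eq_zero_iff]
  exact_mod_cast padicValuation_intCast_eq_one_iff.2 hk'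

theorem padicValuation_self_lt_one : Rat.padicValuation p p < 1 := by
  exact_mod_cast padicValuation_intCast_lt_one_iff.2 (by simp : ((p : ℤ) : ZMod p) = 0)

end PadicValuation

/-- The left-hand side of the polynomial exponential equation, as a rational number. -/
def expPoly (x y z : ℤ) : ℚ :=
  ((x * y - z + 2 : ℤ) : ℚ) * (2 : ℚ) ^ x * (3 : ℚ) ^ y +
    ((x - y + 2 * z + 2 : ℤ) : ℚ) * (5 : ℚ) ^ x * (7 : ℚ) ^ y +
    ((x * y - z + 3 : ℤ) : ℚ) * (11 : ℚ) ^ x * (13 : ℚ) ^ y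

theorem expPoly_ne_zero_of_pos {x y z : ℤ} (hx : 0 < x) (hxy : (x : ZMod 2) = y)
    (hyz : (y : ZMod 2) = z) : expPoly x y z ≠ 0 := by
  let v := Rat.padicValuation 2
  have even_coeff : ((x - y + 2 * z + 2 : ℤ) : ZMod 2) = 0 := by
    push_cast
    rw [hxy, hyz]
    generalize (z : ZMod 2) = t
    decide +revert
  have odd_coeff : ((x * y - z + 3 : ℤ) : ZMod 2) ≠ 0 := by
    push_cast
    rw [hxy, hyz]
    generalize (z : ZMod 2) = t
    decide +revert
  have first_lt : v (((x * y - z + 2 : ℤ) : ℚ) * 2 ^ x * 3 ^ y) < 1 :=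
    valuation_mul_zpow_mul_zpow_lt_one v (padicValuation_intCast_le_one _)
      padicValuation_self_lt_one (padicValuation_ofNat_eq_one (by decide)) hx
  have second_lt : v (((x - y + 2 * z + 2 : ℤ) : ℚ) * 5 ^ x * 7 ^ y) < 1 := by
    rw [valuation_mul_zpow_mul_zpow_of_eq_one v (padicValuation_ofNat_eq_one (by decide))
      (padicValuation_ofNat_eq_one (by decide))]
    exact padicValuation_intCast_lt_one_iff.2 even_coeff
  have third_eq : v (((x * y - z + 3 : ℤ) : ℚ) * 11 ^ x * 13 ^ y) = 1 := by
    rw [valuation_mul_zpow_mul_zpow_of_eq_one v (padicValuation_ofNat_eq_one (by decide))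
      (padicValuation_ofNat_eq_one (by decide))]
    exact padicValuation_intCast_eq_one_iff.2 odd_coeff
  exact add_add_ne_zero_of_valuation_lt v (third_eq ▸ first_lt) (third_eq ▸ second_lt)

theorem expPoly_ne_zero_of_neg {x y z : ℤ} (hy : y < 0) (hxy : (x : ZMod 3) = y)
    (hyz : (y : ZMod 3) = z) : expPoly x y z ≠ 0 := by
  let v := Rat.padicValuation 3
  have coeff_ne_zero : ((x * y - z + 2 : ℤ) : ZMod 3) ≠ 0 := by
    push_cast
    rw [hxy, hyz]
    generalize (z : ZMod 3) = t
    decide +revert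
  have one_lt_first : 1 < v (((x * y - z + 2 : ℤ) : ℚ) * 2 ^ x * 3 ^ y) :=
    one_lt_valuation_mul_zpow_mul_zpow v (padicValuation_intCast_eq_one_iff.2 coeff_ne_zero).ge
      (padicValuation_ofNat_eq_one (by decide)) three_ne_zero padicValuation_self_lt_one hy
  have second_le : v (((x - y + 2 * z + 2 : ℤ) : ℚ) * 5 ^ x * 7 ^ y) ≤ 1 := by
    rw [valuation_mul_zpow_mul_zpow_of_eq_one v (padicValuation_ofNat_eq_one (by decide))
      (padicValuation_ofNat_eq_one (by decide))]
    exact padicValuation_intCast_le_one _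
  have third_le : v (((x * y - z + 3 : ℤ) : ℚ) * 11 ^ x * 13 ^ y) ≤ 1 := by
    rw [valuation_mul_zpow_mul_zpow_of_eq_one v (padicValuation_ofNat_eq_one (by decide))
      (padicValuation_ofNat_eq_one (by decide))]
    exact padicValuation_intCast_le_one _
  rw [expPoly, add_assoc, add_comm]
  exact add_add_ne_zero_of_valuation_lt v (second_le.trans_lt one_lt_first)
    (third_le.trans_lt one_lt_first)

/-- The coloring of `ℤ` by sign and by residues modulo `2` and `3`, which admits no monochromatic
zero of `expPoly`. -/
noncomputable def signResidueColor (x : ℤ) : SignType × ZMod 2 × ZMod 3 :=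
  (SignType.sign x, x, x)

theorem expPoly_ne_zero_of_signResidueColor_eq {x y z : ℤ}
    (hxy : signResidueColor x = signResidueColor y)
    (hyz : signResidueColor y = signResidueColor z) : expPoly x y z ≠ 0 := by
  simp only [signResidueColor, Prod.mk.injEq] at hxy hyz
  obtain ⟨sign_xy, mod_two_xy, mod_three_xy⟩ := hxy
  obtain ⟨sign_yz, mod_two_yz, mod_three_yz⟩ := hyz
  rcases lt_trichotomy y 0 with hy | rfl | hy
  · exact expPoly_ne_zero_of_neg hy mod_three_xy mod_three_yz
  · obtain rfl : x = 0 := by rwa [sign_zero, sign_eq_zero_iff] at sign_xy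
    obtain rfl : z = 0 := by rwa [sign_zero, eq_comm, sign_eq_zero_iff] at sign_yz
    norm_num [expPoly]
  · have hx : 0 < x := by rwa [sign_pos hy, sign_eq_one_iff] at sign_xy
    exact expPoly_ne_zero_of_pos hx mod_two_xy mod_two_yz

/-- The polynomial exponential equation
`(xy - z + 2)·2^x·3^y + (x - y + 2z + 2)·5^x·7^y + (xy - z + 3)·11^x·13^y = 0`
is not partition regular over `ℤ`: some finite coloring of `ℤ` admits no monochromatic
solution. -/
theorem stmt_14 :
    ∃ (r : ℕ) (c : ℤ → Fin r), ¬∃ x y z : ℤ,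
      c x = c y ∧ c y = c z ∧
      ((x * y - z + 2 : ℤ) : ℚ) * (2 : ℚ) ^ x * (3 : ℚ) ^ y +
        ((x - y + 2 * z + 2 : ℤ) : ℚ) * (5 : ℚ) ^ x * (7 : ℚ) ^ y +
        ((x * y - z + 3 : ℤ) : ℚ) * (11 : ℚ) ^ x * (13 : ℚ) ^ y = 0 := by
  let e := Fintype.equivFin (SignType × ZMod 2 × ZMod 3)
  refine ⟨_, fun x ↦ e (signResidueColor x), ?_⟩
  rintro ⟨x, y, z, hxy, hyz, h⟩
  exact expPoly_ne_zero_of_signResidueColor_eq (e.injective hxy) (e.injective hyz) h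
end

section
/- For every integer s, one has 6^s·(s² − s + 2) + 35^s·(2s + 2) + 143^s·(s² − s + 3) ≠ 0, where the powers 6^s, 35^s, 143^s are taken as rational numbers (integer powers in ℚ) and the whole expression is evaluated in ℚ. -/
/-! An integer `s` and the middle coefficient `2 * s + 2` never have opposite signs, so replacing
the base `35` by `6` in the middle term cannot increase the sum. What remains is
`6 ^ s * (s ^ 2 + s + 4) + 143 ^ s * (s ^ 2 - s + 3)`, in which both terms are positive. -/

theorem zpow_le_zpow_left_of_nonpos₀ {G₀ : Type*} [GroupWithZero G₀] [PartialOrder G₀]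
    [PosMulReflectLT G₀] [MulPosReflectLT G₀] {a b : G₀} {n : ℤ} (hn : n ≤ 0) (ha : 0 < a)
    (hab : a ≤ b) : b ^ n ≤ a ^ n := by
  have : MulPosStrictMono G₀ := MulPosReflectLT.toMulPosStrictMono G₀
  have inv_pow_le : b⁻¹ ^ (-n) ≤ a⁻¹ ^ (-n) :=
    zpow_le_zpow_left₀ (neg_nonneg.mpr hn) (inv_nonneg.mpr (ha.le.trans hab)) (inv_anti₀ ha hab)
  simpa only [inv_zpow', neg_neg] using inv_pow_le

section LinearOrderedField

variable {K : Type*} [Field K] [LinearOrder K] [IsStrictOrderedRing K] {a b c q : K} {s : ℤ}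

theorem zpow_mul_le_zpow_mul_of_mul_nonneg (ha : 0 < a) (hab : a ≤ b) (hsq : 0 ≤ (s : K) * q) :
    a ^ s * q ≤ b ^ s * q := by
  rcases lt_trichotomy s 0 with hs | rfl | hs
  · have hq : q ≤ 0 := nonpos_of_mul_nonneg_right hsq (Int.cast_lt_zero.mpr hs)
    exact mul_le_mul_of_nonpos_right (zpow_le_zpow_left_of_nonpos₀ hs.le ha hab) hq
  · simp only [zpow_zero, le_refl]
  · have hq : 0 ≤ q := nonneg_of_mul_nonneg_right hsq (Int.cast_pos.mpr hs)
    exact mul_le_mul_of_nonneg_right (zpow_le_zpow_left₀ hs.le ha.le hab) hq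

theorem stmt_15_general (s : ℤ) (ha : 0 < a) (hab : a ≤ b) (hc : 0 < c) :
    0 < a ^ s * ((s : K) ^ 2 - s + 2) + b ^ s * (2 * s + 2) + c ^ s * ((s : K) ^ 2 - s + 3) := by
  have le_sq : (s : K) ≤ (s : K) ^ 2 := by exact_mod_cast Int.le_self_sq s
  have neg_le_sq : -(s : K) ≤ (s : K) ^ 2 := by
    exact_mod_cast (Int.le_self_sq (-s)).trans_eq (neg_sq s)
  have same_sign : 0 ≤ (s : K) * (2 * s + 2) := by linarith
  have middle_term : a ^ s * (2 * (s : K) + 2) ≤ b ^ s * (2 * s + 2) :=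
    zpow_mul_le_zpow_mul_of_mul_nonneg ha hab same_sign
  have merged_first_terms : 0 < a ^ s * ((s : K) ^ 2 + s + 4) :=
    mul_pos (zpow_pos ha s) (by linarith)
  have last_term : 0 < c ^ s * ((s : K) ^ 2 - s + 3) :=
    mul_pos (zpow_pos hc s) (by linarith)
  linarith

end LinearOrderedField

/-- For every integer `s`, `6^s·(s² - s + 2) + 35^s·(2s + 2) + 143^s·(s² - s + 3) ≠ 0`
in `ℚ`, the powers being integer powers in `ℚ`. -/
theorem stmt_15 (s : ℤ) :
    (6 : ℚ) ^ s * ((s : ℚ) ^ 2 - (s : ℚ) + 2) +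
      (35 : ℚ) ^ s * (2 * (s : ℚ) + 2) +
      (143 : ℚ) ^ s * ((s : ℚ) ^ 2 - (s : ℚ) + 3) ≠ 0 :=
  (stmt_15_general s (by norm_num) (by norm_num) (by norm_num)).ne'
end
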